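/- There is an absolute constant C > 0 with the following property. Let m and n be integers, set N = 24n−23, and write 24m−23 = v²·M where v is a positive integer and M is a squarefree integer. Then for every integer c ≥ 1, |S(m,n,c,χ)| ≤ C · τ(gcd(v,c)) · τ(c) · gcd(M·N, c)^{1/2} · c^{1/2}, where τ(c) is the number of positive divisors of c and gcd(M·N, c) denotes the (nonnegative) greatest common divisor of the integers M·N and c. -/

import Mathlib

open Finset

/-- `e(x) = exp(2πix)`. -/
noncomputable def eFun (x : ℝ) : ℂ := Complex.exp (2 * (Real.pi : ℂ) * Complex.I * (x : ℂ))

/-- The Dedekind sum `s(d,c)`. -/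
noncomputable def dedekindS (d : ℤ) (c : ℕ) : ℝ :=
  ∑ r ∈ Finset.Icc 1 (c - 1),
    ((r : ℝ) / c) * ((d : ℝ) * r / c - ⌊(d : ℝ) * r / c⌋ - 1 / 2)

/-- The Kloosterman sum `S(m,n,c,χ)` with the eta multiplier. -/
noncomputable def klooS (m n : ℤ) (c : ℕ) : ℂ :=
  Complex.exp ((Real.pi : ℂ) * Complex.I / 4) *
    ∑ d ∈ (Finset.Icc 1 c).filter fun d => Nat.gcd d c = 1,
      Complex.exp ((Real.pi : ℂ) * Complex.I * (dedekindS (d : ℤ) c)) *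
        eFun ((((m : ℝ) - 1) * (((d : ZMod c)⁻¹).val : ℝ) + ((n : ℝ) - 1) * (d : ℝ)) / c)

/-!
The Dedekind reciprocity law determines `12 c s(d, c)` modulo `24 c`, and turns the multiplier
`e^{πi s(d, c)}` into the Jacobi symbol `(c / d)`, times a function of `d` modulo `24`, times
`e((d̅ + d) / 24c)`. So `S(m, n, c, χ)` becomes a Kloosterman sum modulo `24 c` with entries
`24 m - 23 = v² M` and `24 n - 23`. Write `c = h² j c'` with `h` of the form `2^i 3^k`, `j ∣ 6` and
`c'` coprime to `6`, and split the sum by the Chinese remainder theorem. By quadratic reciprocity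
the factor modulo `c'` is a Salié sum, bounded prime by prime: for prime modulus by Salié's
evaluation, for prime powers by stationary phase. The weight of the factor modulo `24 h² j` depends
on `d` modulo `24` only, so stationary phase bounds it by a multiple of `h j`. -/

lemma two_mul_sum_range_intCast (c : ℕ) : 2 * ∑ r ∈ range c, (r : ℤ) = c * (c - 1) := by
  induction c with
  | zero => simp
  | succ c ih => rw [sum_range_succ, mul_add, ih]; push_cast; ring

lemma six_mul_sum_range_intCast_sq (c : ℕ) :
    6 * ∑ r ∈ range c, (r : ℤ) ^ 2 = (c - 1) * c * (2 * c - 1) := by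
  induction c with
  | zero => simp
  | succ c ih => rw [sum_range_succ, mul_add, ih]; push_cast; ring

/-- The integer `12 c s(d, c)`, where `s(d, c)` is the Dedekind sum. -/
def dedekindNumerator (d : ℤ) (c : ℕ) : ℤ :=
  2 * d * (c - 1) * (2 * c - 1) - 12 * ∑ r ∈ range c, r * (d * r / c) - 3 * c * (c - 1)

lemma twelve_mul_mul_dedekindS {d : ℤ} {c : ℕ} (hc : 0 < c) :
    12 * c * dedekindS d c = dedekindNumerator d c := by
  have hc' : (c : ℝ) ≠ 0 := by positivity
  have hrange : dedekindS d c =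
      ∑ r ∈ range c, ((r : ℝ) / c) * ((d : ℝ) * r / c - ⌊(d : ℝ) * r / c⌋ - 1 / 2) := by
    refine sum_subset (fun r hr ↦ ?_) fun r hr hr' ↦ ?_
    · simp only [mem_Icc, mem_range] at hr ⊢
      omega
    · obtain rfl : r = 0 := by
        simp only [mem_Icc, mem_range] at hr hr'
        omega
      simp
  have hfloor (r : ℕ) : ⌊(d : ℝ) * r / c⌋ = d * r / c := by
    rw [Int.floor_div_natCast]
    exact_mod_cast congrArg (· / (c : ℤ)) (Int.floor_intCast (R := ℝ) (d * r))
  have hsum : 12 * c * dedekindS d c = 12 * d / c * ∑ r ∈ range c, (r : ℝ) ^ 2 -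
      12 * ∑ r ∈ range c, (r : ℝ) * ((d * r / c : ℤ) : ℝ) - 6 * ∑ r ∈ range c, (r : ℝ) := by
    rw [hrange]
    simp only [mul_sum, ← sum_sub_distrib, hfloor]
    refine sum_congr rfl fun r _ ↦ ?_
    field_simp
    ring
  have hid : 2 * ∑ r ∈ range c, (r : ℝ) = c * (c - 1) := by
    simpa using congrArg (Int.cast : ℤ → ℝ) (two_mul_sum_range_intCast c)
  have hsq : 6 * ∑ r ∈ range c, (r : ℝ) ^ 2 = (c - 1) * c * (2 * c - 1) := by
    simpa using congrArg (Int.cast : ℤ → ℝ) (six_mul_sum_range_intCast_sq c)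
  have hsq' : 12 * d / c * ∑ r ∈ range c, (r : ℝ) ^ 2 = 2 * d * (c - 1) * (2 * c - 1) := by
    field_simp
    linear_combination 2 * (d : ℝ) * hsq
  rw [hsum, hsq']
  simp only [dedekindNumerator, Int.cast_sub, Int.cast_mul, Int.cast_sum, Int.cast_natCast,
    Int.cast_ofNat, Int.cast_one]
  linear_combination -3 * hid

lemma three_dvd_dedekindNumerator (d : ℤ) {c : ℕ} (hc : ¬ 3 ∣ c) :
    3 ∣ dedekindNumerator d c := by
  have h : (3 : ℤ) ∣ ((c : ℤ) - 1) * (2 * c - 1) := by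
    obtain h | h : c % 3 = 1 ∨ c % 3 = 2 := by omega
    · exact Dvd.dvd.mul_right (by omega) _
    · exact Dvd.dvd.mul_left (by omega) _
  obtain ⟨k, hk⟩ := h
  refine ⟨2 * d * k - 4 * ∑ r ∈ range c, r * (d * r / c) - c * (c - 1), ?_⟩
  unfold dedekindNumerator
  linear_combination 2 * d * hk

lemma dedekindNumerator_add_mul (d k : ℤ) {c : ℕ} (hc : 0 < c) :
    dedekindNumerator (d + c * k) c = dedekindNumerator d c := by
  have hsum : ∑ r ∈ range c, r * ((d + c * k) * r / c) =
      ∑ r ∈ range c, r * (d * r / c) + k * ∑ r ∈ range c, (r : ℤ) ^ 2 := by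
    rw [mul_sum, ← sum_add_distrib]
    refine sum_congr rfl fun r _ ↦ ?_
    rw [add_mul, mul_assoc (c : ℤ), Int.add_mul_ediv_left _ _ (by positivity)]
    ring
  unfold dedekindNumerator
  rw [hsum]
  linear_combination -2 * k * six_mul_sum_range_intCast_sq c

lemma dedekindNumerator_emod (d : ℤ) {c : ℕ} (hc : 0 < c) :
    dedekindNumerator (d % c) c = dedekindNumerator d c := by
  rw [← dedekindNumerator_add_mul _ (d / c) hc, Int.emod_add_mul_ediv]

lemma neg_ediv_eq_neg_ediv_sub_one {a b : ℤ} (hb : 0 < b) (h : ¬ b ∣ a) :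
    -a / b = -(a / b) - 1 := by
  have hpos : 0 < a % b := (Int.emod_nonneg a hb.ne').lt_of_ne' fun h0 ↦
    h (Int.dvd_of_emod_eq_zero h0)
  have hlt : a % b < b := Int.emod_lt_of_pos a hb
  have hdiv := Int.emod_add_mul_ediv a b
  rw [Int.ediv_eq_iff_of_pos hb]
  constructor <;> linarith

lemma dedekindNumerator_neg {d : ℤ} {c : ℕ} (hd : IsCoprime d c) :
    dedekindNumerator (-d) c = -dedekindNumerator d c := by
  have hsum : ∑ r ∈ range c, r * (-d * r / c) =
      -∑ r ∈ range c, r * (d * r / c) - ∑ r ∈ range c, (r : ℤ) := by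
    rw [← sum_neg_distrib, ← sum_sub_distrib]
    refine sum_congr rfl fun r hr ↦ ?_
    obtain rfl | hr0 := Nat.eq_zero_or_pos r
    · simp
    have hrc : r < c := mem_range.mp hr
    have hndvd : ¬ (c : ℤ) ∣ d * r := fun h ↦ by
      have := Int.le_of_dvd (by positivity) (hd.symm.dvd_of_dvd_mul_left h)
      omega
    rw [neg_mul, neg_ediv_eq_neg_ediv_sub_one (by omega) hndvd]
    ring
  unfold dedekindNumerator
  rw [hsum]
  linear_combination 6 * two_mul_sum_range_intCast c

section Reciprocity

variable {d c : ℕ}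

lemma sum_range_mul_mod {β : Type*} [AddCommMonoid β] (h : d.Coprime c) (f : ℕ → β) :
    ∑ r ∈ range c, f (d * r % c) = ∑ r ∈ range c, f r := by
  have hmaps : Set.MapsTo (fun r ↦ d * r % c) (range c) (range c) := fun r hr ↦
    mem_range.mpr (Nat.mod_lt _ ((Nat.zero_le r).trans_lt (mem_range.mp hr)))
  have hinj : Set.InjOn (fun r ↦ d * r % c) (range c) := fun a ha b hb hab ↦
    (Nat.ModEq.cancel_left_of_coprime h.symm hab).eq_of_lt_of_lt
      (mem_range.mp ha) (mem_range.mp hb)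
  exact sum_nbij _ hmaps hinj (surjOn_of_injOn_of_card_le _ hmaps hinj le_rfl) fun _ _ ↦ rfl

lemma natCast_mul_mod_eq (d r c : ℕ) : ((d * r % c : ℕ) : ℤ) = d * r - c * (d * r / c) := by
  push_cast
  linarith [Int.emod_add_mul_ediv (d * r : ℤ) c]

lemma two_mul_sum_range_mul_ediv (h : d.Coprime c) (hc : 0 < c) :
    2 * ∑ r ∈ range c, (d * r / c : ℤ) = (d - 1) * (c - 1) := by
  have hperm := sum_range_mul_mod h (fun r ↦ (r : ℤ))
  simp only [natCast_mul_mod_eq, sum_sub_distrib, ← mul_sum] at hperm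
  have hc' : (c : ℤ) ≠ 0 := by positivity
  apply mul_left_cancel₀ hc'
  linear_combination -2 * hperm + (d - 1) * two_mul_sum_range_intCast c

lemma sq_mul_sum_range_mul_ediv_sq (h : d.Coprime c) :
    (c : ℤ) ^ 2 * ∑ r ∈ range c, (d * r / c : ℤ) ^ 2 =
      (1 - d ^ 2) * ∑ r ∈ range c, (r : ℤ) ^ 2 +
        2 * d * c * ∑ r ∈ range c, (r : ℤ) * (d * r / c) := by
  have hperm := sum_range_mul_mod h (fun r ↦ (r : ℤ) ^ 2)
  simp only [natCast_mul_mod_eq] at hperm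
  rw [sub_mul, one_mul]
  nth_rewrite 1 [← hperm]
  simp only [mul_sum, ← sum_add_distrib, ← sum_sub_distrib]
  refine sum_congr rfl fun r _ ↦ ?_
  ring

lemma card_filter_mul_le {k : ℕ} (h : d.Coprime c) (hk0 : 0 < k) (hk : k < d) :
    (#{r ∈ range c | k * c ≤ d * r} : ℤ) = c - 1 - (c * k / d : ℤ) := by
  have hd : 0 < d := hk0.trans hk
  have hIco : {r ∈ range c | k * c ≤ d * r} = Ico (c * k / d + 1) c := by
    ext r
    have hne : c * k ≠ d * r := fun heq ↦
      (Nat.le_of_dvd hk0 (h.dvd_of_dvd_mul_left ⟨r, heq⟩)).not_gt hk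
    rw [mem_filter, mem_range, mem_Ico, Nat.succ_le_iff, Nat.div_lt_iff_lt_mul hd,
      mul_comm k c, mul_comm r d]
    omega
  rcases c.eq_zero_or_pos with rfl | hc
  · have : d = 1 := by simpa using h
    omega
  have hlt : c * k / d < c := by
    rw [Nat.div_lt_iff_lt_mul hd]
    exact Nat.mul_lt_mul_of_pos_left hk hc
  rw [hIco, Nat.card_Ico, Nat.cast_sub (by omega)]
  push_cast
  ring

/-- Count lattice points under the line of slope `d / c` by rows and by columns,
weighting row `k` by `2 * k`. -/
lemma sum_range_ediv_sq_add_ediv (h : d.Coprime c) (hd : 0 < d) :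
    ∑ r ∈ range c, ((d * r / c : ℤ) ^ 2 + (d * r / c : ℤ)) =
      (c - 1) * (d * (d - 1)) - 2 * ∑ k ∈ range d, (k : ℤ) * (c * k / d) := by
  have hcol (r : ℕ) (hr : r ∈ range c) : ((d * r / c : ℤ) ^ 2 + (d * r / c : ℤ)) =
      ∑ k ∈ range d, if k * c ≤ d * r then 2 * (k : ℤ) else 0 := by
    have hrc : r < c := mem_range.mp hr
    have hrange : {k ∈ range d | k * c ≤ d * r} = range (d * r / c + 1) := by
      ext k
      rw [mem_filter, mem_range, mem_range, Nat.lt_succ_iff, Nat.le_div_iff_mul_le (by omega)]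
      refine and_iff_right_of_imp fun hk ↦ ?_
      by_contra! hdk
      exact (hk.trans_lt (Nat.mul_lt_mul_of_pos_left hrc hd)).not_ge
        (Nat.mul_le_mul_right _ hdk)
    rw [← sum_filter, hrange, ← mul_sum, two_mul_sum_range_intCast]
    push_cast
    ring
  have hrow (k : ℕ) (hk : k ∈ range d) :
      (∑ r ∈ range c, if k * c ≤ d * r then 2 * (k : ℤ) else 0) =
        (c - 1) * (2 * k) - 2 * (k * (c * k / d)) := by
    rw [← sum_filter, sum_const, nsmul_eq_mul]
    obtain rfl | hk0 := Nat.eq_zero_or_pos k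
    · simp
    rw [card_filter_mul_le h hk0 (mem_range.mp hk)]
    ring
  rw [sum_congr rfl hcol, sum_comm, sum_congr rfl hrow, sum_sub_distrib, ← mul_sum, ← mul_sum,
    ← mul_sum, two_mul_sum_range_intCast]

theorem dedekindNumerator_reciprocity (h : d.Coprime c) (hd : 0 < d) (hc : 0 < c) :
    (d : ℤ) * dedekindNumerator d c + c * dedekindNumerator c d =
      c ^ 2 + d ^ 2 + 1 - 3 * c * d := by
  have hlattice := sum_range_ediv_sq_add_ediv h hd
  rw [sum_add_distrib] at hlattice
  have hc0 : (c : ℤ) ≠ 0 := by positivity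
  apply mul_left_cancel₀ hc0
  unfold dedekindNumerator
  linear_combination 6 * sq_mul_sum_range_mul_ediv_sq h - 6 * (c : ℤ) ^ 2 * hlattice
    + 3 * (c : ℤ) ^ 2 * two_mul_sum_range_mul_ediv h hc
    + (1 - (d : ℤ) ^ 2) * six_mul_sum_range_intCast_sq c

end Reciprocity

section JacobiSymbol

open scoped NumberTheorySymbols

lemma two_mul_jacobiSym_modEq (a b : ℕ) :
    2 * J(((2 * b + 1 : ℕ) : ℤ) | 2 * a + 1) ≡
      (2 - 4 * a * b) * J(((2 * a + 1 : ℕ) : ℤ) | 2 * b + 1) [ZMOD 8] := by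
  have hsign : 2 * (-1 : ℤ) ^ (b * a) ≡ 2 - 4 * a * b [ZMOD 8] := by
    obtain ⟨k, hk⟩ | ⟨k, hk⟩ := Nat.even_or_odd (b * a)
    · refine (Int.modEq_iff_dvd.mpr ⟨-k, ?_⟩)
      rw [Even.neg_one_pow ⟨k, hk⟩]
      push_cast [← @Nat.cast_inj ℤ] at hk
      linear_combination -4 * hk
    · refine (Int.modEq_iff_dvd.mpr ⟨-k, ?_⟩)
      rw [Odd.neg_one_pow ⟨k, hk⟩]
      push_cast [← @Nat.cast_inj ℤ] at hk
      linear_combination -4 * hk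
  have hrecip := jacobiSym.quadratic_reciprocity (a := 2 * b + 1) (b := 2 * a + 1)
    (odd_two_mul_add_one b) (odd_two_mul_add_one a)
  rw [show (2 * b + 1) / 2 = b by omega, show (2 * a + 1) / 2 = a by omega] at hrecip
  rw [hrecip, ← mul_assoc]
  exact hsign.mul_right _

lemma dedekindNumerator_modEq_eight_of_swap {d c : ℕ} (hco : d.Coprime c) (hd : Odd d)
    (hc : Odd c) (h : dedekindNumerator c d ≡ d + 1 - 2 * J((c : ℤ) | d) [ZMOD 8]) :
    dedekindNumerator d c ≡ c + 1 - 2 * J((d : ℤ) | c) [ZMOD 8] := by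
  have hrecip := dedekindNumerator_reciprocity hco hd.pos hc.pos
  obtain ⟨t, ht⟩ : Odd J((c : ℤ) | d) := by
    obtain h1 | h1 := jacobiSym.eq_one_or_neg_one (a := (c : ℤ)) (b := d)
      (by simpa [Int.gcd_natCast_natCast] using hco.symm) <;> rw [h1] <;> decide
  obtain ⟨a, rfl⟩ := hc
  obtain ⟨b, rfl⟩ := hd
  obtain ⟨k, hk⟩ := h.symm.dvd
  obtain ⟨l, hl⟩ := (two_mul_jacobiSym_modEq a b).symm.dvd
  obtain ⟨a', ha'⟩ := (Int.even_mul_succ_self a).two_dvd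
  obtain ⟨b', hb'⟩ := (Int.even_mul_succ_self b).two_dvd
  generalize J(((2 * b + 1 : ℕ) : ℤ) | 2 * a + 1) = j at *
  generalize J(((2 * a + 1 : ℕ) : ℤ) | 2 * b + 1) = j' at *
  generalize dedekindNumerator (2 * b + 1 : ℕ) (2 * a + 1) = x at *
  generalize dedekindNumerator (2 * a + 1 : ℕ) (2 * b + 1) = w at *
  push_cast at hrecip hk ⊢
  refine Int.ModEq.symm (Int.modEq_iff_dvd.mpr ⟨b - a + t * (a * b + a + b + 1) + l +
    ((2 * b + 1) * a' + b' * (2 * b + 1) - 4 * b' * (2 * a + 1) - (2 * a + 1) * (2 * b + 1) * k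
      - b' * x), ?_⟩)
  subst ht
  linear_combination (2 * (b : ℤ) + 1) * hrecip - (2 * (a : ℤ) + 1) * (2 * b + 1) * hk + hl +
    4 * (2 * (b : ℤ) + 1) * ha' + 4 * ((2 * b + 1) - 4 * (2 * a + 1) - x) * hb'

lemma dedekindNumerator_neg_modEq_eight {d : ℤ} {c : ℕ} (hco : IsCoprime d c) (hc : Odd c)
    (h : dedekindNumerator d c ≡ c + 1 - 2 * J(d | c) [ZMOD 8]) :
    dedekindNumerator (-d) c ≡ c + 1 - 2 * J(-d | c) [ZMOD 8] := by
  rw [dedekindNumerator_neg hco, jacobiSym.neg _ hc]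
  unfold Int.ModEq at h ⊢
  have hJ := jacobiSym.eq_one_or_neg_one (Int.isCoprime_iff_gcd_eq_one.mp hco)
  obtain h4 | h4 : c % 4 = 1 ∨ c % 4 = 3 := by
    have := Nat.odd_iff.mp hc
    omega
  · rw [ZMod.χ₄_nat_one_mod_four h4]
    rcases hJ with hJ | hJ <;> rw [hJ] at h ⊢ <;> omega
  · rw [ZMod.χ₄_nat_three_mod_four h4]
    rcases hJ with hJ | hJ <;> rw [hJ] at h ⊢ <;> omega

lemma exists_odd_lt_modEq (d : ℤ) {c : ℕ} (hc : Odd c) (hc1 : c ≠ 1) (hd : IsCoprime d c) :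
    ∃ e : ℕ, Odd e ∧ e < c ∧ (d ≡ e [ZMOD c] ∨ d ≡ -e [ZMOD c]) := by
  have hc0 : (0 : ℤ) < c := by exact_mod_cast hc.pos
  obtain ⟨e, he⟩ := Int.eq_ofNat_of_zero_le (Int.emod_nonneg d hc0.ne')
  have hmod : d ≡ e [ZMOD c] := by
    rw [← he]
    exact (Int.mod_modEq d c).symm
  have hlt : e < c := by
    have := Int.emod_lt_of_pos d hc0
    omega
  obtain heven | hodd := Nat.even_or_odd e
  · have he0 : e ≠ 0 := by
      rintro rfl
      have := hd.symm.isUnit_of_dvd' dvd_rfl (Int.modEq_zero_iff_dvd.mp (by simpa using hmod))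
      rw [Int.ofNat_isUnit, Nat.isUnit_iff] at this
      exact hc1 this
    refine ⟨c - e, Nat.Odd.sub_even hlt.le hc heven, by omega, .inr ?_⟩
    rw [Nat.cast_sub hlt.le, neg_sub]
    simpa using hmod.sub (Int.ModEq.refl (c : ℤ)) |>.trans (by simp [Int.ModEq])
  · exact ⟨e, hodd, hlt, .inl hmod⟩

theorem dedekindNumerator_modEq_eight {d : ℤ} {c : ℕ} (hc : Odd c) (hd : IsCoprime d c) :
    dedekindNumerator d c ≡ c + 1 - 2 * J(d | c) [ZMOD 8] := by
  induction c using Nat.strong_induction_on generalizing d with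
  | _ c ih =>
  obtain rfl | hc1 := eq_or_ne c 1
  · simp [dedekindNumerator]
  obtain ⟨e, he, hec, hmod⟩ := exists_odd_lt_modEq d hc hc1 hd
  have congr_of_modEq {x y : ℤ} (hxy : x ≡ y [ZMOD c]) :
      dedekindNumerator x c = dedekindNumerator y c ∧ J(x | c) = J(y | c) :=
    ⟨by rw [← dedekindNumerator_emod x hc.pos, hxy, dedekindNumerator_emod y hc.pos],
      jacobiSym.mod_left' hxy⟩
  have hco : IsCoprime (e : ℤ) c := by
    obtain hmod | hmod := hmod <;> obtain ⟨k, hk⟩ := Int.ModEq.dvd hmod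
    · simpa only [← hk, add_sub_cancel] using hd.add_mul_left_left k
    · rw [← IsCoprime.neg_left_iff]
      simpa only [← hk, add_sub_cancel] using hd.add_mul_left_left k
  have hpos : dedekindNumerator e c ≡ c + 1 - 2 * J((e : ℤ) | c) [ZMOD 8] :=
    dedekindNumerator_modEq_eight_of_swap (Nat.isCoprime_iff_coprime.mp hco) he hc
      (ih e hec he hco.symm)
  obtain hmod | hmod := hmod
  · rwa [(congr_of_modEq hmod).1, (congr_of_modEq hmod).2]
  · rw [(congr_of_modEq hmod).1, (congr_of_modEq hmod).2]
    exact dedekindNumerator_neg_modEq_eight hco hc hpos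

end JacobiSymbol

/-- The Kloosterman sum `∑ u, χ u ψ(A u⁻¹ + B u)` over the units of a finite commutative ring,
with additive character `ψ` and a weight `χ` on the units, typically multiplicative or periodic. -/
noncomputable def twistedKloosterman {R : Type*} [CommRing R] [Fintype R] [DecidableEq R]
    (ψ : AddChar R ℂ) (χ : Rˣ → ℂ) (A B : R) : ℂ :=
  ∑ u : Rˣ, χ u * ψ (A * ↑u⁻¹ + B * u)

section FiniteRing

variable {R : Type*} [CommRing R] [Fintype R] [DecidableEq R]
  {ψ : AddChar R ℂ} {χ : Rˣ → ℂ} {A B P : R}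

lemma norm_twistedKloosterman_le_card_units (hχ : ∀ u, ‖χ u‖ ≤ 1) :
    ‖twistedKloosterman ψ χ A B‖ ≤ Fintype.card Rˣ := by
  refine (norm_sum_le _ _).trans ((sum_le_card_nsmul _ _ 1 fun u _ ↦ ?_).trans_eq (by simp))
  rw [norm_mul, AddChar.norm_apply, mul_one]
  exact hχ u

lemma twistedKloosterman_comm (hχ : ∀ u, χ u⁻¹ = χ u) :
    twistedKloosterman ψ χ A B = twistedKloosterman ψ χ B A := by
  unfold twistedKloosterman
  rw [← Equiv.sum_comp (Equiv.inv Rˣ)]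
  refine sum_congr rfl fun u _ ↦ ?_
  rw [Equiv.inv_apply, hχ, inv_inv, add_comm]

/-- Average over the substitutions `u ↦ u (1 + P t)`. -/
lemma card_mul_norm_twistedKloosterman_le (hχ : ∀ u, ‖χ u‖ ≤ 1) (hP : IsNilpotent P)
    (hχP : ∀ (u w : Rˣ) (t : R), (w : R) = 1 + P * t → χ (u * w) = χ u) (hA : A * P ^ 3 = 0) :
    Fintype.card R * ‖twistedKloosterman ψ χ A B‖ ≤
      ∑ u : Rˣ, ‖∑ t, ψ (P * (B * u - A * ↑u⁻¹) * t + P ^ 2 * A * ↑u⁻¹ * t ^ 2)‖ := by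
  have hunit (t : R) : IsUnit (1 + P * t) :=
    (Commute.all P t).isNilpotent_mul_right hP |>.isUnit_one_add
  choose w hw using hunit
  have hinv (t : R) : A * ((w t)⁻¹ : Rˣ) = A * (1 - P * t + P ^ 2 * t ^ 2) := by
    rw [Units.mul_inv_eq_iff_eq_mul, hw]
    linear_combination -t ^ 3 * hA
  have hshift (t : R) : twistedKloosterman ψ χ A B = ∑ u : Rˣ, χ u * ψ (A * ↑u⁻¹ + B * u) *
      ψ (P * (B * u - A * ↑u⁻¹) * t + P ^ 2 * A * ↑u⁻¹ * t ^ 2) := by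
    unfold twistedKloosterman
    rw [← Equiv.sum_comp (Equiv.mulRight (w t))]
    refine sum_congr rfl fun u _ ↦ ?_
    rw [Equiv.coe_mulRight, hχP u (w t) t (hw t), mul_assoc, ← AddChar.map_add_eq_mul]
    congr 2
    rw [mul_inv_rev, Units.val_mul, Units.val_mul, hw]
    linear_combination ((u⁻¹ : Rˣ) : R) * hinv t
  have hsum : (Fintype.card R : ℂ) * twistedKloosterman ψ χ A B =
      ∑ u : Rˣ, χ u * ψ (A * ↑u⁻¹ + B * u) *
        ∑ t, ψ (P * (B * u - A * ↑u⁻¹) * t + P ^ 2 * A * ↑u⁻¹ * t ^ 2) := by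
    simp only [mul_sum]
    rw [sum_comm, ← sum_congr rfl fun t _ ↦ hshift t, sum_const, card_univ, nsmul_eq_mul]
  rw [← Complex.norm_natCast, ← norm_mul, hsum]
  refine norm_sum_le_of_le _ fun u _ ↦ ?_
  rw [norm_mul, norm_mul, AddChar.norm_apply, mul_one]
  exact mul_le_of_le_one_left (norm_nonneg _) (hχ u)

lemma norm_twistedKloosterman_le_card_stationary (hψ : ψ.IsPrimitive) (hχ : ∀ u, ‖χ u‖ ≤ 1)
    (hP : IsNilpotent P) (hχP : ∀ (u w : Rˣ) (t : R), (w : R) = 1 + P * t → χ (u * w) = χ u)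
    (hA : A * P ^ 2 = 0) :
    ‖twistedKloosterman ψ χ A B‖ ≤ #{u : Rˣ | P * (B * u - A * ↑u⁻¹) = 0} := by
  have hR : (0 : ℝ) < Fintype.card R := by exact_mod_cast Fintype.card_pos
  have hsum (u : Rˣ) :
      ‖∑ t, ψ (P * (B * u - A * ↑u⁻¹) * t + P ^ 2 * A * ↑u⁻¹ * t ^ 2)‖ =
        if P * (B * u - A * ↑u⁻¹) = 0 then (Fintype.card R : ℝ) else 0 := by
    simp only [mul_comm (P ^ 2) A, hA, zero_mul, add_zero, mul_comm (P * _) (_ : R),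
      AddChar.sum_mulShift _ hψ]
    split_ifs <;> simp
  refine le_of_mul_le_mul_left ?_ hR
  calc Fintype.card R * ‖twistedKloosterman ψ χ A B‖
      ≤ ∑ u : Rˣ, ‖∑ t, ψ (P * (B * u - A * ↑u⁻¹) * t + P ^ 2 * A * ↑u⁻¹ * t ^ 2)‖ :=
        card_mul_norm_twistedKloosterman_le hχ hP hχP
          (by rw [pow_succ P 2, ← mul_assoc, hA, zero_mul])
    _ = Fintype.card R * #{u : Rˣ | P * (B * u - A * ↑u⁻¹) = 0} := by
        simp_rw [hsum]
        rw [← sum_filter, sum_const, nsmul_eq_mul, mul_comm]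

omit [DecidableEq R] in
lemma sum_quadratic_eq_zero (hψ : ψ.IsPrimitive) {α β h : R} (hβ : β * h = 0) (hα : α * h ≠ 0) :
    ∑ t, ψ (α * t + β * t ^ 2) = 0 := by
  obtain ⟨r, hr⟩ := (AddChar.ne_one_iff).mp (hψ hα)
  rw [AddChar.mulShift_apply] at hr
  have hshift : ∑ t, ψ (α * t + β * t ^ 2) = ψ (α * h * r) * ∑ t, ψ (α * t + β * t ^ 2) := by
    conv_lhs => rw [← Equiv.sum_comp (Equiv.addRight (h * r))]
    rw [mul_sum]
    refine sum_congr rfl fun t _ ↦ ?_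
    rw [← AddChar.map_add_eq_mul, Equiv.coe_addRight]
    congr 1
    linear_combination (2 * t * r + h * r ^ 2) * hβ
  by_contra hne
  exact hr (mul_right_cancel₀ hne (by rw [← hshift, one_mul]))

lemma sum_quadratic_mul_conj (hψ : ψ.IsPrimitive) (h2 : IsUnit (2 : R)) (α β : R) :
    (∑ t, ψ (α * t + β * t ^ 2)) * (starRingEnd ℂ) (∑ t, ψ (α * t + β * t ^ 2)) =
      Fintype.card R * ∑ h with β * h = 0, ψ (α * h) := by
  have hterm (h : R) : ∑ s, ψ (α * (s + h) + β * (s + h) ^ 2) * ψ (-(α * s + β * s ^ 2)) =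
      if β * h = 0 then Fintype.card R * ψ (α * h) else 0 := by
    have hsplit (s : R) : ψ (α * (s + h) + β * (s + h) ^ 2) * ψ (-(α * s + β * s ^ 2)) =
        ψ (α * h + β * h ^ 2) * ψ (s * (2 * (β * h))) := by
      rw [← AddChar.map_add_eq_mul, ← AddChar.map_add_eq_mul]
      congr 1
      ring
    rw [sum_congr rfl fun s _ ↦ hsplit s, ← mul_sum, AddChar.sum_mulShift _ hψ]
    by_cases hh : β * h = 0
    · rw [if_pos (by rw [hh, mul_zero]), if_pos hh, pow_two, ← mul_assoc β, hh, zero_mul,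
        add_zero, mul_comm]
    · rw [if_neg (by rwa [h2.mul_right_eq_zero]), if_neg hh, Nat.cast_zero, mul_zero]
  rw [map_sum, sum_mul_sum, mul_sum, sum_filter, ← sum_congr rfl fun h _ ↦ hterm h, sum_comm,
    eq_comm, sum_comm]
  refine sum_congr rfl fun s _ ↦ ?_
  rw [← Equiv.sum_comp (Equiv.addLeft s) fun t ↦ ψ (α * t + β * t ^ 2) * _]
  simp only [Equiv.coe_addLeft, AddChar.map_neg_eq_conj]

lemma norm_sum_quadratic_le (hψ : ψ.IsPrimitive) (h2 : IsUnit (2 : R)) (α β : R) :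
    ‖∑ t, ψ (α * t + β * t ^ 2)‖ ≤ √(Fintype.card R * #{h : R | β * h = 0}) := by
  refine Real.le_sqrt_of_sq_le ?_
  have hsq := congrArg norm (sum_quadratic_mul_conj hψ h2 α β)
  rw [norm_mul, RCLike.norm_conj, ← sq, norm_mul, Complex.norm_natCast] at hsq
  rw [hsq]
  gcongr
  exact (norm_sum_le _ _).trans_eq (by simp)

/-- Second-order stationary phase: the sum over `t` vanishes unless the linear coefficient
annihilates whatever the quadratic coefficient annihilates. -/
lemma sqrt_card_mul_norm_twistedKloosterman_le (hψ : ψ.IsPrimitive) (h2 : IsUnit (2 : R))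
    (hA : IsUnit A) (hχ : ∀ u, ‖χ u‖ ≤ 1)
    (hχP : ∀ (u w : Rˣ) (t : R), (w : R) = 1 + P * t → χ (u * w) = χ u) (hP : P ^ 3 = 0) :
    √(Fintype.card R) * ‖twistedKloosterman ψ χ A B‖ ≤
      #{u : Rˣ | ∀ h, P ^ 2 * h = 0 → P * (B * u - A * ↑u⁻¹) * h = 0} *
        √(#{h : R | P ^ 2 * h = 0}) := by
  have hR : (0 : ℝ) < Fintype.card R := by exact_mod_cast Fintype.card_pos
  have hann (u : Rˣ) (h : R) : P ^ 2 * A * ↑u⁻¹ * h = 0 ↔ P ^ 2 * h = 0 := by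
    rw [show P ^ 2 * A * ↑u⁻¹ * h = (A * ↑u⁻¹) * (P ^ 2 * h) by ring,
      (hA.mul u⁻¹.isUnit).mul_right_eq_zero]
  have hterm (u : Rˣ) :
      ‖∑ t, ψ (P * (B * u - A * ↑u⁻¹) * t + P ^ 2 * A * ↑u⁻¹ * t ^ 2)‖ ≤
        if ∀ h, P ^ 2 * h = 0 → P * (B * u - A * ↑u⁻¹) * h = 0 then
          √(Fintype.card R * #{h : R | P ^ 2 * h = 0}) else 0 := by
    split_ifs with hu
    · exact (norm_sum_quadratic_le hψ h2 _ _).trans_eq (by rw [filter_congr fun h _ ↦ hann u h])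
    · push Not at hu
      obtain ⟨h, hh, hne⟩ := hu
      rw [sum_quadratic_eq_zero hψ ((hann u h).mpr hh) hne, norm_zero]
  have hle := (card_mul_norm_twistedKloosterman_le (ψ := ψ) (A := A) (B := B) hχ ⟨3, hP⟩ hχP
    (by rw [hP, mul_zero])).trans (sum_le_sum fun u _ ↦ hterm u)
  rw [← sum_filter, sum_const, nsmul_eq_mul, Real.sqrt_mul hR.le] at hle
  refine le_of_mul_le_mul_left ?_ (Real.sqrt_pos.mpr hR)
  rw [← mul_assoc, Real.mul_self_sqrt hR.le]
  linarith

lemma sum_units_add_sum_compl (f : R → ℂ) :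
    ∑ u : Rˣ, f u + ∑ x ∈ (univ.image Units.val : Finset R)ᶜ, f x = ∑ x, f x := by
  rw [← sum_add_sum_compl (univ.image Units.val) f, sum_image Units.val_injective.injOn]

lemma norm_sum_units_le (hψ : ψ.IsPrimitive) {x : R} (hx : x ≠ 0) :
    ‖∑ u : Rˣ, ψ (u * x)‖ ≤ Fintype.card R - Fintype.card Rˣ := by
  have hcard : #(univ.image Units.val : Finset R) = Fintype.card Rˣ :=
    card_image_of_injective _ Units.val_injective
  have hsum := sum_units_add_sum_compl fun y : R ↦ ψ (y * x)
  rw [AddChar.sum_mulShift _ hψ, if_neg hx, Nat.cast_zero] at hsum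
  rw [eq_neg_of_add_eq_zero_left hsum, norm_neg]
  refine (norm_sum_le _ _).trans_eq ?_
  simp only [AddChar.norm_apply, sum_const, nsmul_eq_mul, mul_one]
  rw [card_compl, hcard, Nat.cast_sub (Fintype.card_le_of_injective _ Units.val_injective)]

end FiniteRing

section FiniteField

variable {F : Type*} [Field F] [Fintype F] [DecidableEq F] {ψ : AddChar F ℂ} {A B : F}

lemma sum_mul_sq_eq (hF : ringChar F ≠ 2) (hψ : ψ.IsPrimitive) (c : Fˣ) :
    ∑ x, ψ (c * x ^ 2) =
      quadraticChar F c * gaussSum ((quadraticChar F).ringHomComp (Int.castRingHom ℂ)) ψ := by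
  set χ := (quadraticChar F).ringHomComp (Int.castRingHom ℂ) with hχ
  have hfiber (a : F) : ∑ x with x ^ 2 = a, ψ (c * x ^ 2) = χ a * ψ (c * a) + ψ (c * a) := by
    have hcard : (#{x : F | x ^ 2 = a} : ℤ) = quadraticChar F a + 1 := by
      rw [← quadraticChar_card_sqrts hF]
      congr 2
      ext x
      simp
    rw [sum_congr rfl fun x hx ↦ by rw [(mem_filter.mp hx).2], sum_const, nsmul_eq_mul,
      ← Int.cast_natCast, hcard, Int.cast_add, Int.cast_one, add_mul, one_mul]
    rfl
  have hzero : ∑ a, ψ (c * a) = 0 := by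
    simp_rw [mul_comm (c : F), AddChar.sum_mulShift _ hψ, if_neg c.ne_zero, Nat.cast_zero]
  have hsq : χ c * χ c = 1 := by
    have := quadraticChar_sq_one (a := (c : F)) c.ne_zero
    rw [hχ, MulChar.ringHomComp_apply, ← map_mul, ← sq, this, map_one]
  rw [← sum_fiberwise univ (fun x ↦ x ^ 2)]
  simp_rw [hfiber]
  rw [sum_add_distrib, hzero, add_zero, ← gaussSum_mulShift χ ψ c, ← mul_assoc]
  change gaussSum χ (ψ.mulShift c) = χ c * χ c * _
  rw [hsq, one_mul]

lemma norm_gaussSum_quadraticChar (hF : ringChar F ≠ 2) (hψ : ψ.IsPrimitive) :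
    ‖gaussSum ((quadraticChar F).ringHomComp (Int.castRingHom ℂ)) ψ‖ = √(Fintype.card F) := by
  have h2 : IsUnit (2 : F) := (Ring.two_ne_zero hF).isUnit
  have hsum := sum_mul_sq_eq hF hψ 1
  have hsq := congrArg norm (sum_quadratic_mul_conj hψ h2 0 1)
  simp only [zero_mul, zero_add, one_mul, AddChar.map_zero_eq_one, Units.val_one, map_one,
    Int.cast_one] at hsq hsum
  rw [norm_mul, RCLike.norm_conj, hsum, ← sq] at hsq
  rw [← Real.sqrt_sq (norm_nonneg _), hsq]
  simp [filter_eq']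

lemma card_filter_mul_sq_eq_le (hA : A ≠ 0) : #{y : F | A * y ^ 2 = B} ≤ 2 := by
  obtain hempty | ⟨z, hz⟩ := (univ.filter fun y : F ↦ A * y ^ 2 = B).eq_empty_or_nonempty
  · simp [hempty]
  · refine (card_le_card fun y hy ↦ ?_).trans (card_le_two (a := z) (b := -z))
    simp only [mem_filter, mem_univ, true_and, mem_insert, mem_singleton] at hy hz ⊢
    rw [← sq_eq_sq_iff_eq_or_eq_neg]
    exact mul_left_cancel₀ hA (hy.trans hz.symm)

lemma sum_units_mulShift (hψ : ψ.IsPrimitive) (x : F) :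
    ∑ u : Fˣ, ψ (u * x) = (if x = 0 then (Fintype.card F : ℂ) else 0) - 1 := by
  have hcompl : (univ.image Units.val : Finset F)ᶜ = {0} := by
    ext y
    rw [mem_compl, mem_singleton, not_iff_comm, ← ne_eq, ← isUnit_iff_ne_zero]
    simp [IsUnit]
  have hsum := sum_units_add_sum_compl fun y : F ↦ ψ (y * x)
  rw [hcompl, sum_singleton, zero_mul, AddChar.map_zero_eq_one, AddChar.sum_mulShift _ hψ] at hsum
  rw [eq_sub_iff_add_eq, hsum, Nat.cast_ite, Nat.cast_zero]

/-- Salié's evaluation: expand the quadratic Gauss sum of `-A u⁻¹` in the variable `1 + u y`. -/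
lemma gaussSum_mul_twistedKloosterman (hF : ringChar F ≠ 2) (hψ : ψ.IsPrimitive) (hA : A ≠ 0) :
    (quadraticChar F (-A) : ℂ) *
        gaussSum ((quadraticChar F).ringHomComp (Int.castRingHom ℂ)) ψ *
        twistedKloosterman ψ (fun u ↦ (quadraticChar F u : ℂ)) A B =
      Fintype.card F * ∑ y with A * y ^ 2 = B, ψ (-(2 * A) * y) := by
  set g := gaussSum ((quadraticChar F).ringHomComp (Int.castRingHom ℂ)) ψ
  have hterm (u : Fˣ) : (quadraticChar F (-A) : ℂ) * g *
      (quadraticChar F u * ψ (A * ↑u⁻¹ + B * u)) =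
        ∑ y, ψ (-(2 * A) * y) * ψ (u * (B - A * y ^ 2)) := by
    have hinv : quadraticChar F (u⁻¹ : Fˣ) = quadraticChar F u := by
      rw [Units.val_inv_eq_inv_val, ← MulChar.inv_apply', (quadraticChar_isQuadratic F).inv]
    have hgauss := sum_mul_sq_eq hF hψ (-(Units.mk0 A hA) * u⁻¹)
    simp only [Units.val_mul, Units.val_neg, Units.val_mk0, map_mul, hinv, Int.cast_mul] at hgauss
    rw [show (quadraticChar F (-A) : ℂ) * g * (quadraticChar F u * ψ (A * ↑u⁻¹ + B * u)) =
      quadraticChar F (-A) * quadraticChar F u * g * ψ (A * ↑u⁻¹ + B * u) by ring, ← hgauss,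
      sum_mul, ← Equiv.sum_comp ((Units.mulLeft u).trans (Equiv.addLeft (1 : F)))]
    refine sum_congr rfl fun y _ ↦ ?_
    simp only [Equiv.trans_apply, Units.mulLeft_apply, Equiv.coe_addLeft, ← AddChar.map_add_eq_mul]
    congr 1
    linear_combination (-2 * A * y - A * y ^ 2 * u) * u.inv_mul
  have hdual (y : F) : ∑ u : Fˣ, ψ (-(2 * A) * y) * ψ (u * (B - A * y ^ 2)) =
      (if A * y ^ 2 = B then Fintype.card F * ψ (-(2 * A) * y) else 0) - ψ (y * -(2 * A)) := by
    rw [← mul_sum, sum_units_mulShift hψ, mul_sub, mul_one, mul_comm y,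
      mul_comm (ψ _), ite_mul, zero_mul]
    simp only [sub_eq_zero, eq_comm (a := B)]
  have hne : -(2 * A) ≠ 0 := neg_ne_zero.mpr (mul_ne_zero (Ring.two_ne_zero hF) hA)
  unfold twistedKloosterman
  rw [mul_sum, sum_congr rfl fun u _ ↦ hterm u, sum_comm, sum_congr rfl fun y _ ↦ hdual y,
    sum_sub_distrib, AddChar.sum_mulShift _ hψ, if_neg hne, Nat.cast_zero, sub_zero, ← sum_filter,
    mul_sum]

lemma norm_twistedKloosterman_quadraticChar_le (hF : ringChar F ≠ 2) (hψ : ψ.IsPrimitive)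
    (hA : A ≠ 0) :
    ‖twistedKloosterman ψ (fun u ↦ (quadraticChar F u : ℂ)) A B‖ ≤ 2 * √(Fintype.card F) := by
  have hF0 : (0 : ℝ) < Fintype.card F := by exact_mod_cast Fintype.card_pos
  have hsalie := congrArg norm (gaussSum_mul_twistedKloosterman (B := B) hF hψ hA)
  have hsign : ‖(quadraticChar F (-A) : ℂ)‖ = 1 := by
    obtain h | h := quadraticChar_dichotomy (neg_ne_zero.mpr hA) <;> simp [h]
  rw [norm_mul, norm_mul, hsign, one_mul, norm_gaussSum_quadraticChar hF hψ, norm_mul,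
    Complex.norm_natCast] at hsalie
  refine le_of_mul_le_mul_left ?_ (Real.sqrt_pos.mpr hF0)
  calc √(Fintype.card F) * ‖twistedKloosterman ψ (fun u ↦ (quadraticChar F u : ℂ)) A B‖
      = Fintype.card F * ‖∑ y with A * y ^ 2 = B, ψ (-(2 * A) * y)‖ := hsalie
    _ ≤ Fintype.card F * 2 := by
      gcongr
      refine (norm_sum_le _ _).trans ?_
      simpa using card_filter_mul_sq_eq_le hA
    _ = √(Fintype.card F) * (2 * √(Fintype.card F)) := by
      rw [mul_left_comm, Real.mul_self_sqrt hF0.le, mul_comm]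

end FiniteField

section Products

variable {R S T : Type*} [CommRing R] [CommRing S] [CommRing T]

lemma isPrimitive_comp_symm_inl (e : R ≃+* S × T) {ψ : AddChar R ℂ} (hψ : ψ.IsPrimitive) :
    (ψ.compAddMonoidHom
      (e.symm.toAddMonoidHom.comp (AddMonoidHom.inl S T))).IsPrimitive := by
  intro a ha
  have hne : e.symm (a, 0) ≠ 0 := by simpa using ha
  obtain ⟨y, hy⟩ := AddChar.ne_one_iff.mp (hψ hne)
  refine AddChar.ne_one_iff.mpr ⟨(e y).1, ?_⟩
  have hmul : e.symm (a, 0) * y = e.symm (a * (e y).1, 0) := by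
    rw [← e.symm_apply_apply y, ← map_mul, e.symm_apply_apply, Prod.mk_mul_mk]
    simp
  rw [AddChar.mulShift_apply, hmul] at hy
  simpa using hy

lemma isPrimitive_comp_symm_inr (e : R ≃+* S × T) {ψ : AddChar R ℂ} (hψ : ψ.IsPrimitive) :
    (ψ.compAddMonoidHom
      (e.symm.toAddMonoidHom.comp (AddMonoidHom.inr S T))).IsPrimitive :=
  isPrimitive_comp_symm_inl (e.trans RingEquiv.prodComm) hψ

lemma twistedKloosterman_eq_mul [Fintype R] [DecidableEq R] [Fintype S] [DecidableEq S]
    [Fintype T] [DecidableEq T] (e : R ≃+* S × T) (ψ : AddChar R ℂ) (χ₁ : Sˣ → ℂ) (χ₂ : Tˣ → ℂ)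
    (A B : R) :
    twistedKloosterman ψ
        (fun u ↦ χ₁ (Units.map ((RingHom.fst S T).comp (e : R →+* S × T)) u) *
          χ₂ (Units.map ((RingHom.snd S T).comp (e : R →+* S × T)) u)) A B =
      twistedKloosterman (ψ.compAddMonoidHom
          (e.symm.toAddMonoidHom.comp (AddMonoidHom.inl S T))) χ₁ (e A).1 (e B).1 *
        twistedKloosterman (ψ.compAddMonoidHom
          (e.symm.toAddMonoidHom.comp (AddMonoidHom.inr S T))) χ₂ (e A).2 (e B).2 := by
  unfold twistedKloosterman
  rw [sum_mul_sum, ← sum_product', univ_product_univ,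
    ← Equiv.sum_comp ((Units.mapEquiv e.toMulEquiv).trans MulEquiv.prodUnits).toEquiv]
  refine sum_congr rfl fun u _ ↦ ?_
  have hsplit : A * ↑u⁻¹ + B * u =
      e.symm ((e A).1 * (e ↑u⁻¹).1 + (e B).1 * (e u).1, 0) +
        e.symm (0, (e A).2 * (e ↑u⁻¹).2 + (e B).2 * (e u).2) := by
    apply e.injective
    rw [map_add, map_add, map_mul, map_mul, e.apply_symm_apply, e.apply_symm_apply]
    ext <;> simp
  rw [hsplit, AddChar.map_add_eq_mul, mul_mul_mul_comm]
  rfl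

end Products

lemma exists_twistedKloosterman_zmod_mul_eq {N m n : ℕ} [NeZero N] [NeZero m] [NeZero n]
    (hN : N = m * n) (h : m.Coprime n) {ψ : AddChar (ZMod N) ℂ} (hψ : ψ.IsPrimitive) :
    ∃ (ψ₁ : AddChar (ZMod m) ℂ) (ψ₂ : AddChar (ZMod n) ℂ), ψ₁.IsPrimitive ∧ ψ₂.IsPrimitive ∧
      ∀ (χ₁ : (ZMod m)ˣ → ℂ) (χ₂ : (ZMod n)ˣ → ℂ) (A B : ℤ),
        twistedKloosterman ψ
            (fun u ↦ χ₁ (ZMod.unitsMap (Dvd.intro n hN.symm) u) *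
              χ₂ (ZMod.unitsMap (Dvd.intro_left m hN.symm) u)) A B =
          twistedKloosterman ψ₁ χ₁ A B * twistedKloosterman ψ₂ χ₂ A B := by
  subst hN
  have hmap {k : ℕ} (hk : k ∣ m * n) (f : ZMod (m * n) →+* ZMod k) :
      Units.map (f : ZMod (m * n) →* ZMod k) = ZMod.unitsMap hk := by
    rw [Subsingleton.elim f (ZMod.castHom hk (ZMod k))]
    rfl
  refine ⟨_, _, isPrimitive_comp_symm_inl (ZMod.chineseRemainder h) hψ,
    isPrimitive_comp_symm_inr (ZMod.chineseRemainder h) hψ, fun χ₁ χ₂ A B ↦ ?_⟩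
  have hmul := twistedKloosterman_eq_mul (ZMod.chineseRemainder h) ψ χ₁ χ₂ A B
  simp only [map_intCast, Prod.fst_intCast, Prod.snd_intCast] at hmul
  rwa [hmap (dvd_mul_right m n), hmap (dvd_mul_left n m)] at hmul

lemma sum_comp_monoidHom {G H M : Type*} [Group G] [Fintype G] [Group H] [Fintype H]
    [DecidableEq H] [AddCommMonoid M] {f : G →* H} (hf : Function.Surjective f) (F : H → M) :
    ∑ g, F (f g) = #{g | f g = 1} • ∑ h, F h := by
  rw [← sum_fiberwise univ f, smul_sum]
  refine sum_congr rfl fun h _ ↦ ?_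
  rw [sum_congr rfl fun g hg ↦ by rw [(mem_filter.mp hg).2], sum_const,
    MonoidHom.card_fiber_eq_of_mem_range f (hf h) (hf 1)]

lemma addChar_eq_one_iff {N : ℕ} [NeZero N] {ψ : AddChar (ZMod N) ℂ} (hψ : ψ.IsPrimitive)
    {x : ZMod N} : ψ x = 1 ↔ x = 0 := by
  refine ⟨fun h ↦ ?_, fun h ↦ by rw [h, AddChar.map_zero_eq_one]⟩
  by_contra hx
  exact (AddChar.zmod_char_ne_one_iff N _).mp (hψ hx) (by rwa [AddChar.mulShift_apply, mul_one])

lemma exists_isPrimitive_mul_eq {N k q : ℕ} [NeZero N] [NeZero q] (hN : N = k * q)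
    {ψ : AddChar (ZMod N) ℂ} (hψ : ψ.IsPrimitive) :
    ∃ ψ' : AddChar (ZMod q) ℂ, ψ'.IsPrimitive ∧ ∀ j : ℤ, ψ (k * j) = ψ' j := by
  have hroot : ψ k ^ q = 1 := by
    rw [← AddChar.map_nsmul_eq_pow, nsmul_eq_mul, ← Nat.cast_mul,
      (ZMod.natCast_eq_zero_iff _ _).mpr ⟨1, by rw [hN, mul_one, mul_comm]⟩,
      AddChar.map_zero_eq_one]
  have hcast (j : ℤ) : ψ (k * j) = AddChar.zmodChar q hroot j := by
    rw [mul_comm, ← zsmul_eq_mul, AddChar.map_zsmul_eq_zpow, ← zsmul_one j,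
      AddChar.map_zsmul_eq_zpow, ← Nat.cast_one, AddChar.zmodChar_apply', pow_one]
  refine ⟨_, AddChar.zmod_char_primitive_of_eq_one_only_at_zero q _ fun x hx ↦ ?_, hcast⟩
  obtain ⟨j, rfl⟩ := ZMod.intCast_surjective x
  rw [← hcast, addChar_eq_one_iff hψ, ← Int.cast_natCast, ← Int.cast_mul,
    ZMod.intCast_zmod_eq_zero_iff_dvd, hN, Nat.cast_mul] at hx
  rw [ZMod.intCast_zmod_eq_zero_iff_dvd]
  have hk : (k : ℤ) ≠ 0 := by
    exact_mod_cast (left_ne_zero_of_mul (hN ▸ NeZero.ne N : k * q ≠ 0))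
  exact (mul_dvd_mul_iff_left hk).mp hx

lemma twistedKloosterman_comp_unitsMap {N k q : ℕ} [NeZero N] [NeZero q] (hdvd : q ∣ N)
    {ψ : AddChar (ZMod N) ℂ} {ψ' : AddChar (ZMod q) ℂ} (hψ : ∀ j : ℤ, ψ (k * j) = ψ' j)
    (χ : (ZMod q)ˣ → ℂ) (A B : ℤ) :
    twistedKloosterman ψ (fun u ↦ χ (ZMod.unitsMap hdvd u)) (k * A) (k * B) =
      #{u | ZMod.unitsMap hdvd u = 1} * twistedKloosterman ψ' χ A B := by
  refine Eq.trans (sum_congr rfl fun u _ ↦ ?_)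
    ((sum_comp_monoidHom (ZMod.unitsMap_surjective hdvd) _).trans (nsmul_eq_mul _ _))
  obtain ⟨j, hj⟩ := ZMod.intCast_surjective (u : ZMod N)
  obtain ⟨i, hi⟩ := ZMod.intCast_surjective ((u⁻¹ : (ZMod N)ˣ) : ZMod N)
  have hval := hψ (A * i + B * j)
  push_cast at hval
  rw [← map_inv, ZMod.unitsMap_val, ZMod.unitsMap_val, ← hi, ← hj, ZMod.cast_intCast hdvd,
    ZMod.cast_intCast hdvd, ← hval]
  congr 2
  ring

lemma card_units_mul_sub_inv_le {R : Type*} [CommRing R] [Fintype R] [DecidableEq R]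
    (A B P : R) :
    #{u : Rˣ | P * (B * u - A * ↑u⁻¹) = 0} ≤ #{w : R | P * B * (w ^ 2 - 1) = 0} := by
  obtain hempty | ⟨u₀, hu₀⟩ :=
    (univ.filter fun u : Rˣ ↦ P * (B * u - A * ↑u⁻¹) = 0).eq_empty_or_nonempty
  · simp [hempty]
  have hsq (u : Rˣ) (hu : P * (B * u - A * ↑u⁻¹) = 0) : P * B * u ^ 2 = P * A := by
    linear_combination (u : R) * hu + P * A * u.mul_inv
  refine card_le_card_of_injOn (fun u ↦ (u : R) * ↑u₀⁻¹) (fun u hu ↦ ?_)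
    fun u _ w _ huw ↦ Units.ext (u₀⁻¹.isUnit.mul_left_injective huw)
  have h := hsq u (by simpa using hu)
  have h₀ := hsq u₀ (by simpa using hu₀)
  simp only [coe_filter, mem_univ, true_and, Set.mem_ofPred_eq]
  linear_combination (↑u₀⁻¹ : R) ^ 2 * (h - h₀) + P * B * (u₀ * ↑u₀⁻¹ + 1) * u₀.mul_inv

lemma card_natCast_mul_sub_eq_zero_le {q n : ℕ} [NeZero q] (hn : 0 < n) (w₀ : ZMod q) :
    #{w : ZMod q | n * (w - w₀) = 0} ≤ n := by
  refine (card_le_card_of_injOn (t := {w : ZMod q | n • w = 0}) (· - w₀) (fun w hw ↦ ?_)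
    (sub_left_injective.injOn)).trans (IsAddCyclic.card_nsmul_eq_zero_le hn)
  simpa using hw

section JacobiChar

open scoped NumberTheorySymbols

/-- The Jacobi symbol `J(u | q)` as a character on the units of `ZMod q`. -/
noncomputable def jacobiChar (q : ℕ) [NeZero q] : (ZMod q)ˣ →* ℂ where
  toFun u := (J(((u : ZMod q).val : ℤ) | q) : ℂ)
  map_one' := by
    rw [Units.val_one, ← Int.cast_one (R := ZMod q), ZMod.val_intCast, ← jacobiSym.mod_left,
      jacobiSym.one_left, Int.cast_one]
  map_mul' u w := by
    rw [Units.val_mul, ZMod.val_mul, Int.natCast_mod, ← jacobiSym.mod_left, Nat.cast_mul,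
      jacobiSym.mul_left, Int.cast_mul]

variable {q : ℕ} [NeZero q]

lemma jacobiChar_eq {u : (ZMod q)ˣ} {j : ℤ} (hj : (j : ZMod q) = u) :
    jacobiChar q u = (J(j | q) : ℂ) := by
  change (J(((u : ZMod q).val : ℤ) | q) : ℂ) = _
  rw [← hj, ZMod.val_intCast, ← jacobiSym.mod_left]

lemma jacobiChar_sq (u : (ZMod q)ˣ) : jacobiChar q u ^ 2 = 1 := by
  obtain ⟨j, hj⟩ := ZMod.intCast_surjective (u : ZMod q)
  have hcoprime : j.gcd q = 1 :=
    Int.isCoprime_iff_gcd_eq_one.mp ((ZMod.coe_int_isUnit_iff_isCoprime j q).mp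
      (hj ▸ u.isUnit)).symm
  rw [jacobiChar_eq hj, ← Int.cast_pow, jacobiSym.sq_one hcoprime, Int.cast_one]

lemma norm_jacobiChar (u : (ZMod q)ˣ) : ‖jacobiChar q u‖ = 1 :=
  Complex.norm_eq_one_of_pow_eq_one (jacobiChar_sq u) two_ne_zero

lemma jacobiChar_inv (u : (ZMod q)ˣ) : jacobiChar q u⁻¹ = jacobiChar q u := by
  have hmul : jacobiChar q u⁻¹ * jacobiChar q u = jacobiChar q u * jacobiChar q u := by
    rw [← map_mul, inv_mul_cancel, map_one, ← sq, jacobiChar_sq]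
  exact mul_right_cancel₀ (norm_ne_zero_iff.mp (by simp [norm_jacobiChar])) hmul

omit [NeZero q] in
lemma intCast_eq_val_unitsMap {m : ℕ} (h : m ∣ q) {u : (ZMod q)ˣ} {j : ℤ}
    (hj : (j : ZMod q) = u) : (j : ZMod m) = (ZMod.unitsMap h u : ZMod m) := by
  rw [ZMod.unitsMap_val, ← hj, ZMod.cast_intCast h]

lemma jacobiChar_mul_eq {m n : ℕ} [NeZero m] [NeZero n] (u : (ZMod (m * n))ˣ) :
    jacobiChar (m * n) u = jacobiChar m (ZMod.unitsMap (dvd_mul_right m n) u) *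
      jacobiChar n (ZMod.unitsMap (dvd_mul_left n m) u) := by
  obtain ⟨j, hj⟩ := ZMod.intCast_surjective (u : ZMod (m * n))
  rw [jacobiChar_eq hj, jacobiChar_eq (intCast_eq_val_unitsMap _ hj),
    jacobiChar_eq (intCast_eq_val_unitsMap _ hj), jacobiSym.mul_right, Int.cast_mul]

lemma jacobiChar_unitsMap_eq {m k : ℕ} [NeZero m] (hq : q = k ^ 2 * m) (u : (ZMod q)ˣ) :
    jacobiChar m (ZMod.unitsMap (Dvd.intro_left _ hq.symm) u) = jacobiChar q u := by
  obtain ⟨j, hj⟩ := ZMod.intCast_surjective (u : ZMod q)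
  have : NeZero k := ⟨by rintro rfl; exact NeZero.ne q (by simpa using hq)⟩
  have hcoprime : j.gcd k = 1 := by
    refine Int.isCoprime_iff_gcd_eq_one.mp (IsCoprime.of_isCoprime_of_dvd_right
      ((ZMod.coe_int_isUnit_iff_isCoprime j q).mp (hj ▸ u.isUnit)).symm ?_)
    exact Int.natCast_dvd_natCast.mpr (hq ▸ (dvd_pow_self k two_ne_zero).mul_right m)
  rw [jacobiChar_eq (intCast_eq_val_unitsMap _ hj), jacobiChar_eq hj, hq, jacobiSym.mul_right,
    jacobiSym.pow_right, jacobiSym.sq_one hcoprime, one_mul]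

lemma jacobiChar_eq_quadraticChar {p : ℕ} [Fact p.Prime] (u : (ZMod p)ˣ) :
    jacobiChar p u = (quadraticChar (ZMod p) u : ℂ) := by
  obtain ⟨j, hj⟩ := ZMod.intCast_surjective (u : ZMod p)
  rw [jacobiChar_eq hj, ← jacobiSym.legendreSym.to_jacobiSym, legendreSym, hj]

end JacobiChar

section PrimePower

variable {p a q : ℕ} [Fact p.Prime] [NeZero q] {ψ : AddChar (ZMod q) ℂ}

omit [NeZero q] in
lemma isUnit_intCast_iff_not_dvd (hq : q = p ^ a) (ha : a ≠ 0) {j : ℤ} :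
    IsUnit (j : ZMod q) ↔ ¬ (p : ℤ) ∣ j := by
  rw [ZMod.coe_int_isUnit_iff_isCoprime, hq, Nat.cast_pow,
    IsCoprime.pow_left_iff (Nat.pos_of_ne_zero ha),
    (Nat.prime_iff_prime_int.mp Fact.out).coprime_iff_not_dvd]

omit [NeZero q] in
lemma isUnit_two_zmod (hq : q = p ^ a) (hp2 : p ≠ 2) : IsUnit (2 : ZMod q) := by
  rw [← Nat.cast_two, ZMod.isUnit_iff_coprime, hq]
  exact Nat.Coprime.pow_right _ ((Nat.coprime_primes Nat.prime_two Fact.out).mpr hp2.symm)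

lemma card_pow_mul_sq_sub_one_le (hq : q = p ^ a) (ha : a ≠ 0) (hp2 : p ≠ 2) (k : ℕ) :
    #{w : ZMod q | (p : ZMod q) ^ k * (w ^ 2 - 1) = 0} ≤ 2 * p ^ k := by
  have hpos : 0 < p ^ k := pow_pos (Nat.Prime.pos Fact.out) k
  have hcover : ({w | (p : ZMod q) ^ k * (w ^ 2 - 1) = 0} : Finset (ZMod q)) ⊆
      ({w : ZMod q | (p ^ k : ℕ) * (w - 1) = 0} : Finset _) ∪
        ({w : ZMod q | (p ^ k : ℕ) * (w - -1) = 0} : Finset _) := by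
    intro w hw
    simp only [mem_filter, mem_univ, true_and, mem_union, Nat.cast_pow] at hw ⊢
    have hfactor : (p : ZMod q) ^ k * (w - 1) * (w - -1) = 0 := by linear_combination hw
    by_cases hu : IsUnit (w - -1)
    · exact Or.inl (hu.mul_left_eq_zero.mp hfactor)
    · rw [mul_right_comm] at hfactor
      refine Or.inr ((IsUnit.mul_left_eq_zero ?_).mp hfactor)
      obtain ⟨j, rfl⟩ := ZMod.intCast_surjective w
      have hdvd : (p : ℤ) ∣ j + 1 := by
        rw [← not_not (a := (p : ℤ) ∣ _), ← isUnit_intCast_iff_not_dvd hq ha]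
        simpa using hu
      have htwo := (isUnit_intCast_iff_not_dvd hq ha (j := 2)).mp
        (by simpa using isUnit_two_zmod hq hp2)
      have hunit := (isUnit_intCast_iff_not_dvd hq ha (j := j - 1)).mpr fun h ↦
        htwo (by simpa using dvd_sub hdvd h)
      simpa using hunit
  calc _ ≤ _ := card_le_card hcover
    _ ≤ _ := card_union_le _ _
    _ ≤ p ^ k + p ^ k := add_le_add (card_natCast_mul_sub_eq_zero_le hpos _)
        (card_natCast_mul_sub_eq_zero_le hpos _)
    _ = 2 * p ^ k := (two_mul _).symm

omit [Fact p.Prime] in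
lemma jacobiChar_mul_of_eq_one_add (hq : q = p ^ a) {s : ℕ} (hs : s ≠ 0) (u w : (ZMod q)ˣ)
    (t : ZMod q) (hw : (w : ZMod q) = 1 + p ^ s * t) :
    jacobiChar q (u * w) = jacobiChar q u := by
  obtain ⟨j, rfl⟩ := ZMod.intCast_surjective t
  have hmod : (1 + p ^ s * j) % (p : ℤ) = 1 % p := by
    rw [Int.add_emod, Int.emod_eq_zero_of_dvd ((dvd_pow_self _ hs).mul_right j), add_zero,
      Int.emod_emod]
  have hone : jacobiSym (1 + p ^ s * j) q = 1 := by
    rw [hq, jacobiSym.pow_right, jacobiSym.mod_left' hmod, jacobiSym.one_left, one_pow]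
  rw [map_mul, jacobiChar_eq (u := w) (j := 1 + p ^ s * j) (by rw [hw]; push_cast; rfl), hone,
    Int.cast_one, mul_one]

omit [Fact p.Prime] in
lemma norm_twistedKloosterman_jacobiChar_le_card (hq : q = p ^ a) (hψ : ψ.IsPrimitive) {s : ℕ}
    (hs : s ≠ 0) {A B : ℤ} (hA : (p : ℤ) ^ a ∣ A * (p ^ s) ^ 2) :
    ‖twistedKloosterman ψ (jacobiChar q) A B‖ ≤
      #{u : (ZMod q)ˣ | (p : ZMod q) ^ s * (B * u - A * ↑u⁻¹) = 0} := by
  refine norm_twistedKloosterman_le_card_stationary hψ (fun u ↦ (norm_jacobiChar u).le)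
    ⟨a, ?_⟩ (jacobiChar_mul_of_eq_one_add hq hs) ?_
  · rw [← pow_mul, mul_comm, pow_mul, ← Nat.cast_pow, ← hq, ZMod.natCast_self, zero_pow hs]
  · have hzero := (ZMod.intCast_zmod_eq_zero_iff_dvd (A * (p ^ s) ^ 2) q).mpr (by simpa [hq])
    simpa using hzero

lemma norm_twistedKloosterman_jacobiChar_le (A B : ZMod q) :
    ‖twistedKloosterman ψ (jacobiChar q) A B‖ ≤ q := by
  refine (norm_twistedKloosterman_le_card_units fun u ↦ (norm_jacobiChar u).le).trans ?_
  rw [ZMod.card_units_eq_totient]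
  exact_mod_cast Nat.totient_le q

lemma twistedKloosterman_jacobiChar_eq_zero (hq : q = p ^ a) (hψ : ψ.IsPrimitive) {i : ℕ}
    (hi : i + 2 ≤ a) {A B : ℤ} (hAB : ¬ ((p : ℤ) ∣ A ↔ (p : ℤ) ∣ B)) :
    twistedKloosterman ψ (jacobiChar q) ((p ^ i * A : ℤ) : ZMod q) ((p ^ i * B : ℤ) : ZMod q) =
      0 := by
  have hp := Nat.prime_iff_prime_int.mp (Fact.out : p.Prime)
  obtain ⟨s, rfl⟩ : ∃ s, a = i + s + 1 := ⟨a - i - 1, by omega⟩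
  rw [← norm_le_zero_iff]
  refine (norm_twistedKloosterman_jacobiChar_le_card hq hψ (s := s) (by omega) ?_).trans ?_
  · rw [mul_right_comm, ← pow_mul, ← pow_add]
    exact (pow_dvd_pow _ (by omega)).mul_right A
  rw [filter_eq_empty_iff.mpr, card_empty, Nat.cast_zero]
  intro u _ hu
  obtain ⟨j, hj⟩ := ZMod.intCast_surjective (u : ZMod q)
  obtain ⟨k, hk⟩ := ZMod.intCast_surjective ((u⁻¹ : (ZMod q)ˣ) : ZMod q)
  have hpj := (isUnit_intCast_iff_not_dvd hq (by omega)).mp (hj ▸ u.isUnit)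
  have hpk := (isUnit_intCast_iff_not_dvd hq (by omega)).mp (hk ▸ u⁻¹.isUnit)
  have hcast : ((p ^ (i + s) * (B * j - A * k) : ℤ) : ZMod q) = 0 := by
    rw [← hu, ← hj, ← hk]
    push_cast
    ring
  rw [ZMod.intCast_zmod_eq_zero_iff_dvd, hq, Nat.cast_pow, pow_succ,
    mul_dvd_mul_iff_left (pow_ne_zero _ hp.ne_zero)] at hcast
  have hdvd := dvd_iff_dvd_of_dvd_sub hcast
  rw [hp.dvd_mul, hp.dvd_mul] at hdvd
  tauto

lemma card_forall_annihilator_le (hq : q = p ^ a) (ha : a ≠ 0) (hp2 : p ≠ 2) {s : ℕ}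
    (hs : 2 * s ≤ a) {A B : ZMod q} (hB : IsUnit B) :
    #{u : (ZMod q)ˣ | ∀ h, ((p : ZMod q) ^ s) ^ 2 * h = 0 →
      (p : ZMod q) ^ s * (B * u - A * ↑u⁻¹) * h = 0} ≤ 2 * p ^ (a - s) := by
  calc _ ≤ #{u : (ZMod q)ˣ | (p : ZMod q) ^ (a - s) * (B * u - A * ↑u⁻¹) = 0} := by
        refine card_le_card fun u hu ↦ ?_
        simp only [mem_filter, mem_univ, true_and] at hu ⊢
        have hann : ((p : ZMod q) ^ s) ^ 2 * p ^ (a - 2 * s) = 0 := by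
          rw [← pow_mul, ← pow_add, mul_comm s, Nat.add_sub_cancel' hs, ← Nat.cast_pow, ← hq,
            ZMod.natCast_self]
        rw [← hu _ hann, mul_right_comm, ← pow_add]
        congr 2
        omega
    _ ≤ #{w : ZMod q | (p : ZMod q) ^ (a - s) * B * (w ^ 2 - 1) = 0} :=
        card_units_mul_sub_inv_le _ _ _
    _ ≤ 2 * p ^ (a - s) := by
        simp_rw [mul_right_comm _ B, hB.mul_left_eq_zero]
        exact card_pow_mul_sq_sub_one_le hq ha hp2 _

lemma norm_twistedKloosterman_jacobiChar_le_of_isUnit (hq : q = p ^ a) (hψ : ψ.IsPrimitive)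
    (hp2 : p ≠ 2) (ha : 2 ≤ a) {A B : ZMod q} (hA : IsUnit A) (hB : IsUnit B) :
    ‖twistedKloosterman ψ (jacobiChar q) A B‖ ≤ 2 * √q := by
  obtain ⟨s, hs⟩ : ∃ s, s = a / 2 := ⟨_, rfl⟩
  have hP : ((p : ZMod q) ^ s) ^ 3 = 0 := by
    rw [← pow_mul, ← Nat.cast_pow, ZMod.natCast_eq_zero_iff, hq]
    exact pow_dvd_pow p (by omega)
  have hmain := sqrt_card_mul_norm_twistedKloosterman_le (A := A) (B := B) hψ
    (isUnit_two_zmod hq hp2) hA (fun u ↦ (norm_jacobiChar u).le)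
    (jacobiChar_mul_of_eq_one_add hq (by omega)) hP
  have hstat := card_forall_annihilator_le (A := A) (s := s) hq (by omega) hp2 (by omega) hB
  have hann : #{h : ZMod q | ((p : ZMod q) ^ s) ^ 2 * h = 0} ≤ (p ^ s) ^ 2 := by
    simpa using card_natCast_mul_sub_eq_zero_le (q := q) (n := (p ^ s) ^ 2)
      (pow_pos (pow_pos (Nat.Prime.pos Fact.out) _) _) 0
  have hq0 : (0 : ℝ) < q := by exact_mod_cast NeZero.pos q
  rw [ZMod.card] at hmain
  refine le_of_mul_le_mul_left (hmain.trans ?_) (Real.sqrt_pos.mpr hq0)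
  calc _ ≤ (2 * p ^ (a - s) : ℝ) * √((p ^ s : ℝ) ^ 2) := by
        gcongr
        · exact_mod_cast hstat
        · exact_mod_cast hann
    _ = 2 * q := by
        rw [Real.sqrt_sq (by positivity), mul_assoc, ← pow_add, hq, Nat.cast_pow,
          Nat.sub_add_cancel (by omega)]
    _ = √q * (2 * √q) := by rw [mul_left_comm, Real.mul_self_sqrt hq0.le]

lemma norm_twistedKloosterman_jacobiChar_le_of_not_dvd (hq : q = p ^ a) (hψ : ψ.IsPrimitive)
    (hp2 : p ≠ 2) (ha : a ≠ 0) {A B : ℤ} (hA : ¬ (p : ℤ) ∣ A) :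
    ‖twistedKloosterman ψ (jacobiChar q) A B‖ ≤ 2 * √q := by
  have hAu := (isUnit_intCast_iff_not_dvd hq ha).mpr hA
  obtain rfl | ha2 : a = 1 ∨ 2 ≤ a := by omega
  · obtain rfl : q = p := by rw [hq, pow_one]
    have hsalie := norm_twistedKloosterman_quadraticChar_le (B := (B : ZMod q))
      (by rwa [ZMod.ringChar_zmod_n]) hψ hAu.ne_zero
    rw [ZMod.card] at hsalie
    exact (congrArg norm (congrArg (twistedKloosterman ψ · _ _)
      (funext jacobiChar_eq_quadraticChar))).trans_le hsalie
  · by_cases hB : (p : ℤ) ∣ B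
    · have hzero := twistedKloosterman_jacobiChar_eq_zero hq hψ (i := 0) ha2
        (A := A) (B := B) (by tauto)
      simp only [pow_zero, one_mul] at hzero
      rw [hzero, norm_zero]
      positivity
    · exact norm_twistedKloosterman_jacobiChar_le_of_isUnit hq hψ hp2 ha2 hAu
        ((isUnit_intCast_iff_not_dvd hq ha).mpr hB)

lemma norm_twistedKloosterman_jacobiChar_prime_mul_le (hq : q = p ^ a) (hψ : ψ.IsPrimitive)
    (hp2 : p ≠ 2) (ha : a ≠ 0) {A B : ℤ} (hA : ¬ (p : ℤ) ∣ A) :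
    ‖twistedKloosterman ψ (jacobiChar q) ((p * A : ℤ) : ZMod q) ((p * B : ℤ) : ZMod q)‖ ≤
      2 * p ^ (a / 2 + 1) := by
  obtain ha2 | ha3 : a ≤ 2 ∨ 3 ≤ a := by omega
  · refine (norm_twistedKloosterman_jacobiChar_le _ _).trans ?_
    have hpow : p ^ a ≤ p ^ (a / 2 + 1) := Nat.pow_le_pow_right (Nat.Prime.pos Fact.out) (by omega)
    rw [hq]
    exact_mod_cast hpow.trans (Nat.le_mul_of_pos_left _ two_pos)
  by_cases hB : (p : ℤ) ∣ B
  · have hzero := twistedKloosterman_jacobiChar_eq_zero hq hψ (i := 1) ha3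
      (A := A) (B := B) (by tauto)
    rw [pow_one] at hzero
    rw [hzero, norm_zero]
    positivity
  refine (norm_twistedKloosterman_jacobiChar_le_card hq hψ (s := a / 2) (by omega) ?_).trans ?_
  · rw [mul_right_comm, ← pow_mul, ← pow_succ']
    exact (pow_dvd_pow _ (by omega)).mul_right A
  have hBu := (isUnit_intCast_iff_not_dvd hq ha).mpr hB
  have hcount : #{u : (ZMod q)ˣ | (p : ZMod q) ^ (a / 2) *
      (((p * B : ℤ) : ZMod q) * u - ((p * A : ℤ) : ZMod q) * ↑u⁻¹) = 0} ≤
        2 * p ^ (a / 2 + 1) := by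
    refine (card_units_mul_sub_inv_le _ _ _).trans ?_
    simp_rw [Int.cast_mul, Int.cast_natCast, ← mul_assoc, ← pow_succ,
      mul_right_comm _ (B : ZMod q), hBu.mul_left_eq_zero]
    exact card_pow_mul_sq_sub_one_le hq ha hp2 _
  exact_mod_cast hcount

lemma norm_twistedKloosterman_jacobiChar_sq_le (hq : q = p ^ a) (hψ : ψ.IsPrimitive)
    (ha : 2 ≤ a) {A B : ℤ} (hB : ¬ (p : ℤ) ∣ B) :
    ‖twistedKloosterman ψ (jacobiChar q) ((p ^ 2 * A : ℤ) : ZMod q) ((p * B : ℤ) : ZMod q)‖ ≤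
      √q := by
  have hp0 := (Fact.out : p.Prime).ne_zero
  obtain rfl | ha3 : a = 2 ∨ 3 ≤ a := by omega
  · have hA0 : ((p ^ 2 * A : ℤ) : ZMod q) = 0 := by
      rw [ZMod.intCast_zmod_eq_zero_iff_dvd, hq, Nat.cast_pow]
      exact dvd_mul_right _ _
    have hB0 : ((p * B : ℤ) : ZMod q) ≠ 0 := by
      rwa [Ne, ZMod.intCast_zmod_eq_zero_iff_dvd, hq, Nat.cast_pow, sq,
        mul_dvd_mul_iff_left (by exact_mod_cast hp0)]
    have hchar (u : (ZMod q)ˣ) : jacobiChar q u = 1 := by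
      rw [← jacobiChar_unitsMap_eq (m := 1) (by rw [hq, mul_one]) u,
        Subsingleton.elim (ZMod.unitsMap _ u) 1, map_one]
    have hcard : (q : ℝ) - q.totient = √q := by
      have htot : (q.totient : ℝ) = p * (p - 1) := by
        rw [hq, Nat.totient_prime_pow Fact.out two_pos, Nat.cast_mul,
          Nat.cast_pred (Nat.Prime.pos Fact.out), show 2 - 1 = 1 from rfl, pow_one]
      rw [htot, hq, Nat.cast_pow, Real.sqrt_sq p.cast_nonneg]
      ring
    have hram := norm_sum_units_le hψ hB0
    rw [ZMod.card, ZMod.card_units_eq_totient, hcard] at hram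
    unfold twistedKloosterman
    simp_rw [hA0, hchar, one_mul, zero_mul, zero_add]
    simpa only [mul_comm] using hram
  · have hzero := twistedKloosterman_jacobiChar_eq_zero hq hψ (i := 1) ha3
      (A := p * A) (B := B) (by simp [hB])
    rw [pow_one, ← mul_assoc, ← sq] at hzero
    rw [hzero, norm_zero]
    positivity

lemma norm_twistedKloosterman_jacobiChar_le_of_not_dvd_and (hq : q = p ^ a) (hψ : ψ.IsPrimitive)
    (hp2 : p ≠ 2) (ha : a ≠ 0) {A B : ℤ} (hAB : ¬ ((p : ℤ) ∣ A ∧ (p : ℤ) ∣ B)) :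
    ‖twistedKloosterman ψ (jacobiChar q) A B‖ ≤ 2 * √q := by
  obtain hA | hB := not_and_or.mp hAB
  · exact norm_twistedKloosterman_jacobiChar_le_of_not_dvd hq hψ hp2 ha hA
  · rw [twistedKloosterman_comm jacobiChar_inv]
    exact norm_twistedKloosterman_jacobiChar_le_of_not_dvd hq hψ hp2 ha hB

lemma exists_twistedKloosterman_jacobiChar_descent {r b : ℕ} [NeZero r] (hq : q = p ^ 2 * r)
    (hr : r = p ^ b) (hb : b ≠ 0) (hψ : ψ.IsPrimitive) :
    ∃ ψ' : AddChar (ZMod r) ℂ, ψ'.IsPrimitive ∧ ∀ A B : ℤ,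
      twistedKloosterman ψ (jacobiChar q) ((p ^ 2 * A : ℤ) : ZMod q) ((p ^ 2 * B : ℤ) : ZMod q) =
        p ^ 2 * twistedKloosterman ψ' (jacobiChar r) A B := by
  have hr0 : 0 < r.totient := Nat.totient_pos.mpr (NeZero.pos r)
  have hker : #{u : (ZMod q)ˣ | ZMod.unitsMap (Dvd.intro_left _ hq.symm : r ∣ q) u = 1} =
      p ^ 2 := by
    have hcard := sum_comp_monoidHom (ZMod.unitsMap_surjective (Dvd.intro_left _ hq.symm : r ∣ q))
      fun _ ↦ (1 : ℕ)
    have htot : q.totient = p ^ 2 * r.totient := by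
      have hpr : p ∣ r := hr ▸ dvd_pow_self p hb
      rw [hq, sq, mul_assoc, Nat.totient_mul_of_prime_of_dvd Fact.out (hpr.mul_left p),
        Nat.totient_mul_of_prime_of_dvd Fact.out hpr, mul_assoc]
    simp only [sum_const, card_univ, ZMod.card_units_eq_totient, smul_eq_mul, mul_one, htot]
      at hcard
    exact (Nat.eq_of_mul_eq_mul_right hr0 hcard).symm
  obtain ⟨ψ', hψ', hcast⟩ := exists_isPrimitive_mul_eq hq hψ
  refine ⟨ψ', hψ', fun A B ↦ ?_⟩
  have hdesc := twistedKloosterman_comp_unitsMap (Dvd.intro_left _ hq.symm) hcast (jacobiChar r) A B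
  simp_rw [jacobiChar_unitsMap_eq hq] at hdesc
  rw [hker] at hdesc
  push_cast at hdesc ⊢
  exact hdesc

omit [Fact p.Prime] in
lemma norm_twistedKloosterman_jacobiChar_le_of_dvd {X : ℤ} (hX : (q : ℤ) ∣ X) (A B : ZMod q) :
    ‖twistedKloosterman ψ (jacobiChar q) A B‖ ≤ √(q * Int.gcd X q) := by
  rw [Int.gcd_eq_natAbs_right hX, Int.natAbs_natCast, Real.sqrt_mul_self q.cast_nonneg]
  exact norm_twistedKloosterman_jacobiChar_le A B

lemma pow_half_add_one_le_sqrt (hq : q = p ^ a) (ha : 2 ≤ a) {X : ℤ} (hX : (p : ℤ) ^ 2 ∣ X) :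
    (p : ℝ) ^ (a / 2 + 1) ≤ √(q * Int.gcd X q) := by
  have hp1 : (1 : ℝ) ≤ p := by exact_mod_cast (Fact.out : p.Prime).one_lt.le
  have hgcd : p ^ 2 ≤ Int.gcd X q :=
    Nat.le_of_dvd (Int.gcd_pos_of_ne_zero_right _ (by exact_mod_cast NeZero.ne q))
      (Int.dvd_gcd (by exact_mod_cast hX) (by exact_mod_cast hq ▸ pow_dvd_pow p ha))
  refine Real.le_sqrt_of_sq_le ?_
  calc ((p : ℝ) ^ (a / 2 + 1)) ^ 2 ≤ p ^ a * p ^ 2 := by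
        rw [← pow_mul, ← pow_add]
        exact pow_le_pow_right₀ hp1 (by omega)
    _ ≤ q * (Int.gcd X q : ℝ) := by
        have hqp : (q : ℝ) = p ^ a := by exact_mod_cast hq
        rw [← hqp]
        gcongr
        exact_mod_cast hgcd

omit [Fact p.Prime] in
lemma sqrt_le_sqrt_mul_gcd (X : ℤ) : √q ≤ √(q * Int.gcd X q) := by
  have hpos : 0 < Int.gcd X q :=
    Int.gcd_pos_of_ne_zero_right _ (by exact_mod_cast NeZero.ne q)
  exact Real.sqrt_le_sqrt (le_mul_of_one_le_right q.cast_nonneg (by exact_mod_cast hpos))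

omit [Fact p.Prime] in
lemma sqrt_mul_gcd_sq_mul {k r : ℕ} (X : ℤ) :
    √((k ^ 2 * r : ℕ) * Int.gcd (k ^ 2 * X) (k ^ 2 * r : ℕ)) = k ^ 2 * √(r * Int.gcd X r) := by
  have hgcd : Int.gcd (k ^ 2 * X) (k ^ 2 * r : ℕ) = k ^ 2 * Int.gcd X r := by
    rw [Nat.cast_mul, Nat.cast_pow, Int.gcd_mul_left, Int.natAbs_pow, Int.natAbs_natCast]
  rw [hgcd, ← Real.sqrt_sq (by positivity : (0 : ℝ) ≤ k ^ 2), ← Real.sqrt_mul (by positivity)]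
  congr 1
  push_cast
  ring

lemma norm_twistedKloosterman_jacobiChar_le_of_dvd_of_not_dvd (hq : q = p ^ a)
    (hψ : ψ.IsPrimitive) (hp2 : p ≠ 2) (ha : 2 ≤ a) {v M B : ℤ} (hA : (p : ℤ) ∣ v ^ 2 * M)
    (hv : ¬ (p : ℤ) ∣ v) (hM : ¬ (p : ℤ) ^ 2 ∣ M) :
    ‖twistedKloosterman ψ (jacobiChar q) ((v ^ 2 * M : ℤ) : ZMod q) ((p * B : ℤ) : ZMod q)‖ ≤
      2 * √(q * Int.gcd (M * (p * B)) q) := by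
  have hp := Nat.prime_iff_prime_int.mp (Fact.out : p.Prime)
  obtain ⟨M, rfl⟩ := (hp.dvd_or_dvd hA).resolve_left fun h ↦ hv (hp.dvd_of_dvd_pow h)
  have hvM : ¬ (p : ℤ) ∣ v ^ 2 * M := fun h ↦ (hp.dvd_or_dvd h).elim
    (fun h ↦ hv (hp.dvd_of_dvd_pow h)) fun h ↦ hM (sq (p : ℤ) ▸ mul_dvd_mul_left _ h)
  rw [mul_left_comm (v ^ 2)]
  refine (norm_twistedKloosterman_jacobiChar_prime_mul_le hq hψ hp2 (by omega) hvM).trans ?_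
  gcongr
  exact pow_half_add_one_le_sqrt hq ha ⟨M * B, by ring⟩

lemma norm_twistedKloosterman_jacobiChar_primePow_le (hq : q = p ^ a) (hψ : ψ.IsPrimitive)
    (hp2 : p ≠ 2) (ha : a ≠ 0) (v : ℤ) {M : ℤ} (hM : ¬ (p : ℤ) ^ 2 ∣ M) (B : ℤ) :
    ‖twistedKloosterman ψ (jacobiChar q) ((v ^ 2 * M : ℤ) : ZMod q) B‖ ≤
      2 * √(q * Int.gcd (M * B) q) := by
  induction a using Nat.strong_induction_on generalizing q v B with | _ a ih
  by_cases hAB : (p : ℤ) ∣ v ^ 2 * M ∧ (p : ℤ) ∣ B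
  swap
  · exact (norm_twistedKloosterman_jacobiChar_le_of_not_dvd_and hq hψ hp2 ha hAB).trans
      (mul_le_mul_of_nonneg_left (sqrt_le_sqrt_mul_gcd _) zero_le_two)
  obtain ⟨hA, B, rfl⟩ := hAB
  by_cases hdvd : (q : ℤ) ∣ M * (p * B)
  · exact (norm_twistedKloosterman_jacobiChar_le_of_dvd hdvd _ _).trans
      (le_mul_of_one_le_left (Real.sqrt_nonneg _) one_le_two)
  have ha2 : 2 ≤ a := by
    refine (Nat.two_le_iff a).mpr ⟨ha, fun ha1 ↦ hdvd ?_⟩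
    rw [hq, ha1, pow_one]
    exact ⟨M * B, by ring⟩
  by_cases hv : (p : ℤ) ∣ v
  swap
  · exact norm_twistedKloosterman_jacobiChar_le_of_dvd_of_not_dvd hq hψ hp2 ha2 hA hv hM
  obtain ⟨v, rfl⟩ := hv
  rw [mul_pow, mul_assoc]
  by_cases hB : (p : ℤ) ∣ B
  swap
  · refine (norm_twistedKloosterman_jacobiChar_sq_le hq hψ ha2 hB).trans ?_
    exact (sqrt_le_sqrt_mul_gcd _).trans (le_mul_of_one_le_left (Real.sqrt_nonneg _) one_le_two)
  obtain ⟨B, rfl⟩ := hB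
  rw [← mul_assoc (p : ℤ), ← sq] at hdvd ⊢
  obtain ⟨b, rfl⟩ := Nat.exists_eq_add_of_le ha2
  have hb : b ≠ 0 := by
    rintro rfl
    exact hdvd ⟨M * B, by rw [hq]; push_cast; ring⟩
  have : NeZero (p ^ b) := ⟨pow_ne_zero _ (Fact.out : p.Prime).ne_zero⟩
  rw [pow_add] at hq
  obtain ⟨ψ', hψ', hdesc⟩ := exists_twistedKloosterman_jacobiChar_descent hq rfl hb hψ
  rw [hdesc, norm_mul, norm_pow, Complex.norm_natCast]
  refine (mul_le_mul_of_nonneg_left (ih b (by omega) rfl hψ' hb v B) (by positivity)).trans_eq ?_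
  rw [mul_left_comm M, hq, sqrt_mul_gcd_sq_mul]
  ring

end PrimePower

lemma norm_twistedKloosterman_jacobiChar_odd_le {q : ℕ} [hq : NeZero q] (hodd : Odd q)
    {ψ : AddChar (ZMod q) ℂ} (hψ : ψ.IsPrimitive) (v : ℤ) {M : ℤ} (hM : Squarefree M) (B : ℤ) :
    ‖twistedKloosterman ψ (jacobiChar q) ((v ^ 2 * M : ℤ) : ZMod q) B‖ ≤
      #q.divisors * √(q * Int.gcd (M * B) q) := by
  induction q using Nat.recOnPosPrimePosCoprime generalizing hq with
  | zero => exact absurd rfl hq.out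
  | one =>
    refine (norm_twistedKloosterman_jacobiChar_le _ _).trans ?_
    simp
  | prime_pow p a hp ha =>
    have : Fact p.Prime := ⟨hp⟩
    have hp2 : p ≠ 2 := by
      rintro rfl
      exact Nat.not_odd_iff_even.mpr (even_two.pow_of_ne_zero ha.ne') hodd
    have hMp : ¬ (p : ℤ) ^ 2 ∣ M := fun h ↦
      (Nat.prime_iff_prime_int.mp hp).not_isUnit (hM p (sq (p : ℤ) ▸ h))
    refine (norm_twistedKloosterman_jacobiChar_primePow_le rfl hψ hp2 ha.ne' v hMp B).trans ?_
    have hcard : (2 : ℝ) ≤ #(p ^ a).divisors := by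
      rw [Nat.divisors_prime_pow hp, card_map, card_range]
      exact_mod_cast Nat.succ_le_succ ha
    gcongr
  | coprime m n hm hn hmn ihm ihn =>
    have : NeZero m := ⟨by omega⟩
    have : NeZero n := ⟨by omega⟩
    obtain ⟨hoddm, hoddn⟩ := Nat.odd_mul.mp hodd
    obtain ⟨ψ₁, ψ₂, hψ₁, hψ₂, hmul⟩ := exists_twistedKloosterman_zmod_mul_eq rfl hmn hψ
    have hgcd : Int.gcd (M * B) (m * n : ℕ) = Int.gcd (M * B) m * Int.gcd (M * B) n :=
      Nat.Coprime.gcd_mul _ hmn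
    rw [funext jacobiChar_mul_eq, hmul, norm_mul, hmn.card_divisors_mul, hgcd]
    refine (mul_le_mul (ihm hoddm hψ₁) (ihn hoddn hψ₂) (norm_nonneg _) (by positivity)).trans_eq ?_
    rw [mul_mul_mul_comm, ← Real.sqrt_mul (by positivity), mul_mul_mul_comm (m : ℝ)]
    push_cast
    rfl

section TwoThree

lemma exists_sign_three_pow_dvd_sub {k : ℕ} {x : ℤ} (hx : 3 ^ k ∣ x ^ 2 - 1) :
    ∃ s ∈ ({1, -1} : Finset ℤ), 3 ^ k ∣ x - s := by
  rw [show x ^ 2 - 1 = (x - 1) * (x - -1) by ring] at hx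
  by_cases h3 : 3 ∣ x - 1
  · have hcop : IsCoprime (3 ^ k) (x - -1) :=
      ((Int.prime_three.coprime_iff_not_dvd).mpr (by omega)).pow_left
    exact ⟨1, by simp, hcop.dvd_of_dvd_mul_right hx⟩
  · have hcop : IsCoprime (3 ^ k) (x - 1) :=
      ((Int.prime_three.coprime_iff_not_dvd).mpr h3).pow_left
    exact ⟨-1, by simp, hcop.dvd_of_dvd_mul_left hx⟩

lemma exists_sign_two_pow_dvd_two_mul_sub {k : ℕ} {x : ℤ} (hx : 2 ^ k ∣ x ^ 2 - 1) :
    ∃ s ∈ ({1, -1} : Finset ℤ), 2 ^ k ∣ 2 * (x - s) := by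
  obtain rfl | hk := eq_or_ne k 0
  · exact ⟨1, by simp⟩
  have hcop {y : ℤ} (hy : Odd y) : IsCoprime (2 ^ k) y :=
    (Int.isCoprime_two_left.mpr hy).pow_left
  have hodd : Odd x := by
    have heven : Even (x ^ 2 - 1) := even_iff_two_dvd.mpr ((dvd_pow_self 2 hk).trans hx)
    simpa [Int.even_sub, parity_simps] using heven
  obtain ⟨y, rfl⟩ := hodd
  obtain ⟨z, rfl⟩ | hy := Int.even_or_odd y
  · refine ⟨1, by simp, (hcop (y := z + z + 1) ?_).dvd_of_dvd_mul_right (hx.trans ⟨1, by ring⟩)⟩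
    exact ⟨z, by ring⟩
  · exact ⟨-1, by simp, (hcop hy).dvd_of_dvd_mul_right (hx.trans ⟨1, by ring⟩)⟩

lemma exists_four_approx_sqrt_one (i k : ℕ) :
    ∃ Y : Finset ℤ, #Y ≤ 4 ∧ ∀ x : ℤ, 2 ^ i * 3 ^ k ∣ x ^ 2 - 1 →
      ∃ y ∈ Y, 2 ^ i * 3 ^ k ∣ 2 * (x - y) := by
  have hcop : IsCoprime (2 ^ i : ℤ) (3 ^ k) := IsCoprime.pow (by norm_num)
  have ⟨a, b, hab⟩ := hcop
  refine ⟨(({1, -1} : Finset ℤ) ×ˢ {1, -1}).image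
    fun (s, t) ↦ t * (a * 2 ^ i) + s * (b * 3 ^ k), card_image_le, fun x hx ↦ ?_⟩
  obtain ⟨s, hs, h2⟩ := exists_sign_two_pow_dvd_two_mul_sub ((dvd_mul_right _ _).trans hx)
  obtain ⟨t, ht, h3⟩ := exists_sign_three_pow_dvd_sub ((dvd_mul_left _ _).trans hx)
  refine ⟨_, mem_image_of_mem _ (mk_mem_product hs ht), hcop.mul_dvd ?_ (Dvd.dvd.mul_left ?_ 2)⟩
  · convert dvd_add h2 (dvd_mul_right (2 ^ i) (2 * (s - t) * a)) using 1
    linear_combination -2 * s * hab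
  · convert dvd_add h3 (dvd_mul_right (3 ^ k) ((t - s) * b)) using 1
    linear_combination -t * hab

lemma card_natCast_mul_sq_sub_one_le {n h q : ℕ} [NeZero q] (hq : q = n * h) {Y : Finset ℤ}
    (hY : ∀ x : ℤ, (h : ℤ) ∣ x ^ 2 - 1 → ∃ y ∈ Y, (h : ℤ) ∣ 2 * (x - y)) :
    #{w : ZMod q | (n : ZMod q) * (w ^ 2 - 1) = 0} ≤ #Y * (2 * n) := by
  have hn : 0 < n := Nat.pos_of_ne_zero (left_ne_zero_of_mul (hq ▸ NeZero.ne q : n * h ≠ 0))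
  have hdvd_iff (z : ℤ) : (n : ZMod q) * z = 0 ↔ (h : ℤ) ∣ z := by
    rw [← Int.cast_natCast, ← Int.cast_mul, ZMod.intCast_zmod_eq_zero_iff_dvd, hq, Nat.cast_mul,
      mul_dvd_mul_iff_left (by exact_mod_cast hn.ne')]
  calc _ ≤ #(Y.biUnion fun y ↦ {w : ZMod q | ((2 * n : ℕ) : ZMod q) * (w - y) = 0}) := by
        refine card_le_card fun w hw ↦ ?_
        obtain ⟨x, rfl⟩ := ZMod.intCast_surjective w
        obtain ⟨y, hy, hxy⟩ := hY x <| (hdvd_iff _).mp <| by simpa using hw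
        refine mem_biUnion.mpr ⟨y, hy, ?_⟩
        have hzero := (hdvd_iff _).mpr hxy
        push_cast at hzero
        simp only [mem_filter, mem_univ, true_and, Nat.cast_mul, Nat.cast_two]
        linear_combination hzero
    _ ≤ #Y * (2 * n) := card_biUnion_le_card_mul _ _ _ fun y _ ↦
        card_natCast_mul_sub_eq_zero_le (by omega) _

lemma norm_twistedKloosterman_two_three_le {i k j q : ℕ} [NeZero q]
    (hq : q = 24 * ((2 ^ i * 3 ^ k) ^ 2 * j)) {ψ : AddChar (ZMod q) ℂ} (hψ : ψ.IsPrimitive)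
    {χ : (ZMod q)ˣ → ℂ} (hχ : ∀ u, ‖χ u‖ ≤ 1)
    (hχ24 : ∀ (u w : (ZMod q)ˣ) (t : ZMod q), (w : ZMod q) = 1 + 24 * t → χ (u * w) = χ u)
    (A : ZMod q) {B : ZMod q} (hB : IsUnit B) :
    ‖twistedKloosterman ψ χ A B‖ ≤ 192 * (2 ^ i * 3 ^ k * j) := by
  obtain ⟨Y, hY, hroot⟩ := exists_four_approx_sqrt_one i k
  have hsq : ((24 * (2 ^ i * 3 ^ k * j) : ℕ) : ZMod q) ^ 2 = 0 := by
    rw [← Nat.cast_pow, ZMod.natCast_eq_zero_iff]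
    exact ⟨24 * j, by rw [hq]; ring⟩
  have hcount : #{w : ZMod q | ((24 * (2 ^ i * 3 ^ k * j) : ℕ) : ZMod q) * B * (w ^ 2 - 1) = 0} ≤
      192 * (2 ^ i * 3 ^ k * j) := by
    simp_rw [mul_right_comm _ B, hB.mul_left_eq_zero]
    refine (card_natCast_mul_sq_sub_one_le (h := 2 ^ i * 3 ^ k) (by rw [hq]; ring)
      (by exact_mod_cast hroot)).trans ?_
    calc _ ≤ 4 * (2 * (24 * (2 ^ i * 3 ^ k * j))) := Nat.mul_le_mul_right _ hY
      _ = _ := by ring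
  refine (norm_twistedKloosterman_le_card_stationary hψ hχ ⟨2, hsq⟩ (fun u w t hw ↦
    hχ24 u w (2 ^ i * 3 ^ k * j * t) ?_) (by rw [hsq, mul_zero])).trans ?_
  · rw [hw]
    push_cast
    ring
  · exact_mod_cast (card_units_mul_sub_inv_le A B _).trans hcount

end TwoThree

lemma exists_eq_sq_mul_mul_coprime_six {c : ℕ} (hc : c ≠ 0) :
    ∃ i k j c' : ℕ, c = (2 ^ i * 3 ^ k) ^ 2 * j * c' ∧ j ∣ 6 ∧ Nat.Coprime 6 c' := by
  obtain ⟨α, x, hx, rfl⟩ := Nat.exists_eq_pow_mul_and_not_dvd hc 2 (by norm_num)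
  obtain ⟨β, y, hy, rfl⟩ := Nat.exists_eq_pow_mul_and_not_dvd (right_ne_zero_of_mul hc) 3
    (by norm_num)
  have h6 : Nat.Coprime (2 * 3) y := Nat.Coprime.mul_left
    (Nat.prime_two.coprime_iff_not_dvd.mpr fun h ↦ hx (h.mul_left _))
    (Nat.prime_three.coprime_iff_not_dvd.mpr hy)
  have hsplit (p n : ℕ) : p ^ n = (p ^ (n / 2)) ^ 2 * p ^ (n % 2) := by
    rw [← pow_mul, ← pow_add, mul_comm, Nat.div_add_mod]
  refine ⟨α / 2, β / 2, 2 ^ (α % 2) * 3 ^ (β % 2), y, ?_, ?_, h6⟩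
  · rw [hsplit 2 α, hsplit 3 β]
    ring
  · obtain hα | hα := Nat.mod_two_eq_zero_or_one α <;>
      obtain hβ | hβ := Nat.mod_two_eq_zero_or_one β <;> rw [hα, hβ] <;> decide

section EtaMultiplier

open NumberTheorySymbols

lemma dedekindNumerator_modEq_twentyFour {d : ℕ} (hd : d.Coprime 24) {c : ℕ} (hc : c.Coprime d) :
    dedekindNumerator c d ≡ 9 * (d + 1 - 2 * J(c | d)) [ZMOD 24] := by
  have hodd : Odd d := Nat.Coprime.odd_of_right (Nat.Coprime.coprime_dvd_right (by norm_num) hd)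
  have h3 : ¬ 3 ∣ d := (Nat.prime_three.coprime_iff_not_dvd).mp
    (Nat.Coprime.coprime_dvd_right (by norm_num) hd).symm
  have hmod3 := three_dvd_dedekindNumerator c h3
  have hmod8 := dedekindNumerator_modEq_eight hodd (Nat.isCoprime_iff_coprime.mpr hc)
  rw [Int.modEq_iff_dvd] at hmod8 ⊢
  omega

lemma mul_self_modEq_one_of_coprime {d : ℕ} (hd : d.Coprime 24) : (d * d : ℤ) ≡ 1 [ZMOD 24] := by
  have hsq : ∀ u : (ZMod 24)ˣ, (u * u : ZMod 24) = 1 := by decide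
  refine (ZMod.intCast_eq_intCast_iff _ _ 24).mp ?_
  simpa using hsq (ZMod.unitOfCoprime d hd)

lemma dedekindNumerator_modEq {c d : ℕ} (hd : d.Coprime (24 * c)) (hd0 : 0 < d) (hc0 : 0 < c)
    {D : ℤ} (hD : d * D ≡ 1 [ZMOD 24 * c]) :
    dedekindNumerator d c ≡ D + d + c * (d * (c - 3) + 6 * (1 - J(c | d))) [ZMOD c * 24] := by
  have hdc : d.Coprime c := hd.coprime_mul_left_right
  have hd24 : d.Coprime 24 := hd.coprime_mul_right_right
  have hrec := dedekindNumerator_reciprocity hdc hd0 hc0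
  obtain ⟨k, hk⟩ := hD.symm.dvd
  have hreduce : dedekindNumerator d c ≡
      D + d + c * (D * (c - 3 * d - dedekindNumerator c d)) [ZMOD c * 24] := by
    refine (Int.modEq_iff_dvd.mpr ⟨(d - dedekindNumerator d c) * k, ?_⟩).symm
    linear_combination (d - dedekindNumerator d c) * hk + D * hrec
  refine hreduce.trans (Int.ModEq.add_left _ (Int.ModEq.mul_left' ?_))
  obtain ⟨s, hs⟩ := (mul_self_modEq_one_of_coprime hd24).symm.dvd
  obtain ⟨w, hw⟩ := (dedekindNumerator_modEq_twentyFour hd24 hdc.symm).symm.dvd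
  have hDd : D ≡ d [ZMOD 24] :=
    (Int.modEq_iff_dvd.mpr ⟨d * c * k - D * s, by linear_combination d * hk - D * hs⟩).symm
  have hJ : J(c | d) = 1 ∨ J(c | d) = -1 :=
    jacobiSym.eq_one_or_neg_one (Int.gcd_natCast_natCast c d ▸ hdc.symm)
  obtain ⟨r, hr⟩ : Odd (d : ℤ) := by
    exact_mod_cast (Nat.Coprime.coprime_dvd_right (by norm_num : 2 ∣ 24) hd24).odd_of_right
  refine (hDd.mul_right _).trans (Int.modEq_iff_dvd.mpr ?_)
  obtain hJ | hJ := hJ <;> rw [hJ] at hw ⊢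
  · exact ⟨d * w + 12 * s - r, by linear_combination 12 * hs + d * hw - 12 * hr⟩
  · exact ⟨d * w + 12 * s + d + 1, by linear_combination 12 * hs + d * hw⟩

lemma stdAddChar_natCast_mul {n q k : ℕ} [NeZero n] [NeZero q] (h : n = k * q) (j : ℤ) :
    ZMod.stdAddChar (k * j : ZMod n) = ZMod.stdAddChar (j : ZMod q) := by
  rw [← Int.cast_natCast, ← Int.cast_mul, ZMod.stdAddChar_coe, ZMod.stdAddChar_coe]
  have hk : (k : ℂ) ≠ 0 :=
    Nat.cast_ne_zero.mpr (left_ne_zero_of_mul (h ▸ NeZero.ne n : k * q ≠ 0))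
  rw [h]
  push_cast
  field_simp

lemma stdAddChar_six_mul_one_sub {e : ℤ} (he : e = 1 ∨ e = -1) :
    ZMod.stdAddChar ((6 * (1 - e) : ℤ) : ZMod 24) = (e : ℂ) := by
  obtain rfl | rfl := he
  · simp
  · rw [ZMod.stdAddChar_coe, Int.cast_neg, Int.cast_one, ← Complex.exp_pi_mul_I]
    congr 1
    push_cast
    ring

lemma exp_pi_mul_I_mul_dedekindS (d : ℤ) (c : ℕ) [NeZero c] :
    Complex.exp (Real.pi * Complex.I * dedekindS d c) =
      ZMod.stdAddChar (dedekindNumerator d c : ZMod (24 * c)) := by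
  have hc : (c : ℂ) ≠ 0 := Nat.cast_ne_zero.mpr (NeZero.ne c)
  have hs : 12 * (c : ℂ) * dedekindS d c = dedekindNumerator d c := by
    exact_mod_cast twelve_mul_mul_dedekindS (d := d) (NeZero.pos c)
  rw [ZMod.stdAddChar_coe, ← hs]
  congr 1
  push_cast
  field_simp
  ring

lemma eFun_intCast_div (c : ℕ) [NeZero c] (x : ℤ) :
    eFun (x / c) = ZMod.stdAddChar (x : ZMod c) := by
  rw [ZMod.stdAddChar_coe, eFun]
  congr 1
  push_cast
  ring

/-- The part of the eta multiplier `e^{πi s(d, c)}` that remains after removing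
`e((d̅ + d) / 24c)`, where `d̅` is an inverse of `d` modulo `24c`. -/
noncomputable def etaMultiplier (c d : ℕ) : ℂ :=
  J(c | d) * ZMod.stdAddChar (d * (c - 3) : ZMod 24)

lemma stdAddChar_dedekindNumerator {c : ℕ} [NeZero c] (u : (ZMod (24 * c))ˣ) :
    ZMod.stdAddChar (dedekindNumerator (u : ZMod (24 * c)).val c : ZMod (24 * c)) =
      etaMultiplier c (u : ZMod (24 * c)).val *
        ZMod.stdAddChar ((u⁻¹ : (ZMod (24 * c))ˣ) + u : ZMod (24 * c)) := by
  set d := (u : ZMod (24 * c)).val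
  obtain ⟨D, hD⟩ := ZMod.intCast_surjective ((u⁻¹ : (ZMod (24 * c))ˣ) : ZMod (24 * c))
  have hdu : (d : ZMod (24 * c)) = u := ZMod.natCast_zmod_val _
  have hcop : d.Coprime (24 * c) := ZMod.val_coe_unit_coprime u
  have hd0 : 0 < d := Nat.pos_of_ne_zero fun h ↦ by
    rw [h, Nat.coprime_zero_left] at hcop
    omega
  have hinv : d * D ≡ 1 [ZMOD 24 * c] := by
    have : ((d * D : ℤ) : ZMod (24 * c)) = (1 : ℤ) := by
      push_cast
      rw [hdu, hD, Units.mul_inv]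
    exact_mod_cast (ZMod.intCast_eq_intCast_iff _ _ _).mp this
  have hJ : J(c | d) = 1 ∨ J(c | d) = -1 :=
    jacobiSym.eq_one_or_neg_one (Int.gcd_natCast_natCast c d ▸ hcop.coprime_mul_left_right.symm)
  have hmod : ((dedekindNumerator d c : ℤ) : ZMod (24 * c)) =
      ((D + d + c * (d * (c - 3) + 6 * (1 - J(c | d))) : ℤ) : ZMod (24 * c)) :=
    (ZMod.intCast_eq_intCast_iff _ _ _).mpr <| by
      simpa only [Nat.cast_mul, Nat.cast_ofNat, mul_comm (c : ℤ) 24] using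
        dedekindNumerator_modEq hcop hd0 (NeZero.pos c) hinv
  rw [hmod, Int.cast_add, AddChar.map_add_eq_mul, Int.cast_mul, Int.cast_natCast,
    stdAddChar_natCast_mul (mul_comm 24 c), Int.cast_add _ (6 * _), AddChar.map_add_eq_mul,
    stdAddChar_six_mul_one_sub hJ, etaMultiplier]
  push_cast
  rw [hD, hdu]
  ring

lemma sum_coprime_Icc_eq_sum_units {E : Type*} [AddCommMonoid E] (c : ℕ) [NeZero c]
    (F : ZMod c → E) :
    ∑ d ∈ Icc 1 c with Nat.gcd d c = 1, F d = ∑ u : (ZMod c)ˣ, F u := by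
  refine sum_bij (fun d hd ↦ ZMod.unitOfCoprime d (mem_filter.mp hd).2) (fun _ _ ↦ mem_univ _)
    (fun d hd d' hd' h ↦ ?_) (fun u _ ↦ ?_) (fun d hd ↦ by rw [ZMod.coe_unitOfCoprime])
  · have hmod := (ZMod.natCast_eq_natCast_iff _ _ _).mp (congrArg Units.val h)
    have hd := mem_Icc.mp (mem_filter.mp hd).1
    have hd' := mem_Icc.mp (mem_filter.mp hd').1
    exact Nat.ModEq.eq_of_abs_lt hmod (by rw [abs_lt]; omega)
  · have hcast : (((u - 1 : ZMod c).val + 1 : ℕ) : ZMod c) = u := by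
      rw [Nat.cast_succ, ZMod.natCast_zmod_val, sub_add_cancel]
    have hcop := (ZMod.isUnit_iff_coprime _ c).mp (hcast ▸ u.isUnit)
    refine ⟨_, mem_filter.mpr ⟨mem_Icc.mpr ⟨Nat.le_add_left 1 _, ZMod.val_lt _⟩, hcop⟩, ?_⟩
    exact Units.ext hcast

lemma klooS_eq_exp_mul_twistedKloosterman (m n : ℤ) (c : ℕ) [NeZero c] :
    klooS m n c = Complex.exp ((Real.pi / 4 : ℝ) * Complex.I) *
      twistedKloosterman ZMod.stdAddChar (fun u : (ZMod c)ˣ ↦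
        ZMod.stdAddChar (dedekindNumerator (u : ZMod c).val c : ZMod (24 * c)))
        ((m - 1 : ℤ) : ZMod c) ((n - 1 : ℤ) : ZMod c) := by
  rw [klooS, twistedKloosterman]
  congr 1
  · congr 1
    push_cast
    ring
  simp_rw [← ZMod.inv_coe_unit]
  rw [← sum_coprime_Icc_eq_sum_units c fun x ↦
    ZMod.stdAddChar (dedekindNumerator x.val c : ZMod (24 * c)) *
      ZMod.stdAddChar (((m - 1 : ℤ) : ZMod c) * x⁻¹ + ((n - 1 : ℤ) : ZMod c) * x)]
  refine sum_congr rfl fun d _ ↦ ?_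
  have harg := eFun_intCast_div c ((m - 1) * (d : ZMod c)⁻¹.val + (n - 1) * d)
  push_cast [ZMod.natCast_zmod_val] at harg ⊢
  rw [exp_pi_mul_I_mul_dedekindS, harg, ZMod.val_natCast, Int.natCast_mod,
    dedekindNumerator_emod _ (NeZero.pos c)]

lemma norm_klooS_le (m n : ℤ) (c : ℕ) [NeZero c] :
    ‖klooS m n c‖ ≤ ‖twistedKloosterman ZMod.stdAddChar
      (fun u : (ZMod (24 * c))ˣ ↦ etaMultiplier c (u : ZMod (24 * c)).val)
      ((24 * m - 23 : ℤ) : ZMod (24 * c)) ((24 * n - 23 : ℤ) : ZMod (24 * c))‖ := by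
  have hdvd : c ∣ 24 * c := dvd_mul_left c 24
  have hker : (1 : ℝ) ≤ #{u : (ZMod (24 * c))ˣ | ZMod.unitsMap hdvd u = 1} := by
    exact_mod_cast card_pos.mpr ⟨1, by simp⟩
  rw [klooS_eq_exp_mul_twistedKloosterman, norm_mul, Complex.norm_exp_ofReal_mul_I, one_mul]
  refine (le_mul_of_one_le_left (norm_nonneg _) hker).trans_eq ?_
  rw [← Complex.norm_natCast, ← norm_mul,
    ← twistedKloosterman_comp_unitsMap hdvd (stdAddChar_natCast_mul rfl)]
  refine congrArg _ (sum_congr rfl fun u _ ↦ ?_)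
  have hdn : dedekindNumerator (ZMod.unitsMap hdvd u : ZMod c).val c =
      dedekindNumerator (u : ZMod (24 * c)).val c := by
    rw [ZMod.unitsMap_val, ZMod.cast_eq_val, ZMod.val_natCast, Int.natCast_mod,
      dedekindNumerator_emod _ (NeZero.pos c)]
  beta_reduce
  rw [hdn, stdAddChar_dedekindNumerator, mul_assoc, ← AddChar.map_add_eq_mul]
  congr 2
  push_cast
  ring

end EtaMultiplier

section EtaMultiplierFactorization

open NumberTheorySymbols

lemma jacobiSym_mod_twentyFour {j d : ℕ} (hj : j ∣ 6) (hd : Odd d) : J(j | d % 24) = J(j | d) := by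
  have hd' : Odd (d % 24) := by
    rw [Nat.odd_iff] at hd ⊢
    omega
  have h24 : 4 * j ∣ 24 := mul_dvd_mul_left 4 hj
  rw [jacobiSym.mod_right _ hd, jacobiSym.mod_right _ hd', Int.natAbs_natCast,
    Nat.mod_mod_of_dvd d h24]

lemma qrSign_mod_twentyFour (d n : ℕ) : qrSign (d % 24) n = qrSign d n := by
  rw [qrSign, qrSign, (ZMod.natCast_eq_natCast_iff' (d % 24) d 4).mpr
    (Nat.mod_mod_of_dvd d (by norm_num))]

lemma norm_intCast_jacobiSym_le_one (a : ℤ) (b : ℕ) : ‖(J(a | b) : ℂ)‖ ≤ 1 := by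
  obtain h | h | h := jacobiSym.trichotomy a b <;> simp [h]

lemma exists_etaMultiplier_eq_mul_jacobiSym (h : ℕ) {j c' : ℕ} (hj : j ∣ 6) (hc' : Odd c') :
    ∃ G : ZMod 24 → ℂ, (∀ y, ‖G y‖ ≤ 1) ∧ ∀ d : ℕ, Odd d → h.Coprime d →
      etaMultiplier (h ^ 2 * j * c') d = G d * J(d | c') := by
  refine ⟨fun y ↦ J(j | y.val) * qrSign y.val c' *
    ZMod.stdAddChar (y * ((h ^ 2 * j * c' : ℕ) - 3) : ZMod 24), fun y ↦ ?_, fun d hd hh ↦ ?_⟩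
  · rw [norm_mul, norm_mul, AddChar.norm_apply, mul_one]
    exact mul_le_one₀ (norm_intCast_jacobiSym_le_one _ _) (norm_nonneg _)
      (norm_intCast_jacobiSym_le_one _ _)
  · have hJ : J((h ^ 2 * j * c' : ℕ) | d) = J(j | d) * (qrSign d c' * J(d | c')) := by
      push_cast
      rw [jacobiSym.mul_left, jacobiSym.mul_left, jacobiSym.pow_left,
        jacobiSym.sq_one (by rwa [Int.gcd_natCast_natCast]), one_mul,
        jacobiSym.quadratic_reciprocity' hc' hd]
    beta_reduce
    rw [etaMultiplier, hJ, ZMod.val_natCast, jacobiSym_mod_twentyFour hj hd, qrSign_mod_twentyFour]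
    push_cast
    ring

lemma exists_etaMultiplier_val_eq_mul_jacobiChar {c h j c' q : ℕ} [NeZero c] [NeZero c']
    (hc : c = h ^ 2 * j * c') (hj : j ∣ 6) (hc' : Odd c') (hq : q = 24 * (h ^ 2 * j))
    (hN : 24 * c = q * c') :
    ∃ χ : (ZMod q)ˣ → ℂ, (∀ u, ‖χ u‖ ≤ 1) ∧
      (∀ (u w : (ZMod q)ˣ) (t : ZMod q), (w : ZMod q) = 1 + 24 * t → χ (u * w) = χ u) ∧
      ∀ u : (ZMod (24 * c))ˣ, etaMultiplier c (u : ZMod (24 * c)).val =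
        χ (ZMod.unitsMap (Dvd.intro c' hN.symm) u) *
          jacobiChar c' (ZMod.unitsMap (Dvd.intro_left q hN.symm) u) := by
  obtain ⟨G, hG, hfactor⟩ := exists_etaMultiplier_eq_mul_jacobiSym h hj hc'
  have h24 : 24 ∣ q := Dvd.intro _ hq.symm
  refine ⟨fun u ↦ G (ZMod.castHom h24 (ZMod 24) u), fun u ↦ hG _, fun u w t hw ↦ ?_, fun u ↦ ?_⟩
  · have hzero : (24 : ZMod 24) = 0 := by decide
    beta_reduce
    rw [Units.val_mul, hw, map_mul, map_add, map_one, map_mul, map_ofNat, hzero, zero_mul, add_zero,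
      mul_one]
  · set d := (u : ZMod (24 * c)).val
    have hcop : d.Coprime (24 * c) := ZMod.val_coe_unit_coprime u
    have hdu : ((d : ℤ) : ZMod (24 * c)) = u := by rw [Int.cast_natCast, ZMod.natCast_zmod_val]
    have hodd : Odd d := (hcop.coprime_dvd_right (Dvd.intro (12 * c) (by ring))).odd_of_right
    have hhd : h.Coprime d :=
      (hcop.coprime_dvd_right ⟨24 * (h * j * c'), by rw [hc]; ring⟩).symm
    have hfac := hfactor d hodd hhd
    rw [← hc] at hfac
    beta_reduce
    rw [hfac, jacobiChar_eq (intCast_eq_val_unitsMap _ hdu), ← intCast_eq_val_unitsMap _ hdu,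
      map_intCast, Int.cast_natCast]

end EtaMultiplierFactorization

lemma isCoprime_twentyFour_mul {X : ℤ} (hX : IsCoprime X 6) (i k : ℕ) {j : ℕ} (hj : j ∣ 6) :
    IsCoprime X (24 * ((2 ^ i * 3 ^ k) ^ 2 * j) : ℕ) := by
  have h2 : IsCoprime X 2 := hX.of_isCoprime_of_dvd_right (by norm_num)
  have h3 : IsCoprime X 3 := hX.of_isCoprime_of_dvd_right (by norm_num)
  have h24 : IsCoprime X 24 :=
    ((h2.mul_right h2).mul_right hX).of_isCoprime_of_dvd_right (by norm_num)
  have hj : IsCoprime X j := hX.of_isCoprime_of_dvd_right (by exact_mod_cast hj)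
  push_cast
  exact h24.mul_right ((h2.pow_right.mul_right h3.pow_right).pow_right.mul_right hj)

lemma norm_klooS_le_of_eq_sq_mul_mul {m v M : ℤ} (n : ℤ) (hM : Squarefree M)
    (hm : 24 * m - 23 = v ^ 2 * M) {c i k j c' : ℕ} [NeZero c]
    (hc : c = (2 ^ i * 3 ^ k) ^ 2 * j * c') (hj : j ∣ 6) (hc' : Nat.Coprime 6 c') :
    ‖klooS m n c‖ ≤ 192 * (2 ^ i * 3 ^ k * j) *
      (#c'.divisors * √(c' * Int.gcd (M * (24 * n - 23)) c')) := by
  generalize hq : 24 * ((2 ^ i * 3 ^ k) ^ 2 * j) = q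
  have hN : 24 * c = q * c' := by rw [hc, ← hq]; ring
  have : NeZero q := ⟨left_ne_zero_of_mul (hN ▸ NeZero.ne (24 * c))⟩
  have : NeZero c' := ⟨right_ne_zero_of_mul (hN ▸ NeZero.ne (24 * c))⟩
  have hodd : Odd c' := (hc'.coprime_dvd_left (by norm_num : 2 ∣ 6)).odd_of_left
  have hcop : q.Coprime c' := by
    rw [← Nat.isCoprime_iff_coprime, isCoprime_comm, ← hq]
    exact isCoprime_twentyFour_mul (Nat.isCoprime_iff_coprime.mpr hc').symm i k hj
  have hunit : IsUnit ((24 * n - 23 : ℤ) : ZMod q) := by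
    rw [ZMod.coe_int_isUnit_iff_isCoprime, isCoprime_comm, ← hq]
    exact isCoprime_twentyFour_mul ⟨1, -(4 * n - 4), by ring⟩ i k hj
  obtain ⟨χ, hχ, hχ24, hfactor⟩ :=
    exists_etaMultiplier_val_eq_mul_jacobiChar hc hj hodd hq.symm hN
  obtain ⟨ψ₁, ψ₂, hψ₁, hψ₂, hmul⟩ :=
    exists_twistedKloosterman_zmod_mul_eq hN hcop (ZMod.isPrimitive_stdAddChar (24 * c))
  refine (norm_klooS_le m n c).trans ?_
  rw [funext hfactor, hmul, norm_mul, hm]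
  exact mul_le_mul (norm_twistedKloosterman_two_three_le hq.symm hψ₁ hχ hχ24 _ hunit)
    (norm_twistedKloosterman_jacobiChar_odd_le hodd hψ₂ v hM _) (norm_nonneg _) (by positivity)

theorem statement4_general {m v M : ℤ} (n : ℤ) (hM : Squarefree M)
    (hm : 24 * m - 23 = v ^ 2 * M) {c : ℕ} (hc : c ≠ 0) :
    ‖klooS m n c‖ ≤ 576 * #c.divisors * √(Int.gcd (M * (24 * n - 23)) c) * √c := by
  have : NeZero c := ⟨hc⟩
  obtain ⟨i, k, j, c', hfac, hj, hc'⟩ := exists_eq_sq_mul_mul_coprime_six hc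
  have hdvd : c' ∣ c := Dvd.intro_left _ hfac.symm
  have hdiv : #c'.divisors ≤ #c.divisors := card_le_card (Nat.divisors_subset_of_dvd hc hdvd)
  have hgcd : Int.gcd (M * (24 * n - 23)) c' ≤ Int.gcd (M * (24 * n - 23)) c :=
    Nat.le_of_dvd (Int.gcd_pos_of_ne_zero_right _ (by exact_mod_cast hc))
      (Int.gcd_dvd_gcd_of_dvd_right _ (Int.natCast_dvd_natCast.mpr hdvd))
  have hsqrt : (2 ^ i * 3 ^ k * j : ℝ) * √c' ≤ 3 * √c := by
    have hsq : (2 ^ i * 3 ^ k * j) ^ 2 * c' ≤ 3 ^ 2 * c :=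
      calc (2 ^ i * 3 ^ k * j) ^ 2 * c' = j * c := by rw [hfac]; ring
        _ ≤ 3 ^ 2 * c := by gcongr; exact (Nat.le_of_dvd (by norm_num) hj).trans (by norm_num)
    calc (2 ^ i * 3 ^ k * j : ℝ) * √c' = √((2 ^ i * 3 ^ k * j) ^ 2 * c') := by
          rw [Real.sqrt_mul (by positivity), Real.sqrt_sq (by positivity)]
      _ ≤ √(3 ^ 2 * c) := Real.sqrt_le_sqrt (by exact_mod_cast hsq)
      _ = 3 * √c := by rw [Real.sqrt_mul (by norm_num), Real.sqrt_sq (by norm_num)]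
  refine (norm_klooS_le_of_eq_sq_mul_mul n hM hm hfac hj hc').trans ?_
  rw [Real.sqrt_mul c'.cast_nonneg]
  calc _ = 192 * #c'.divisors * √(Int.gcd (M * (24 * n - 23)) c') * (2 ^ i * 3 ^ k * j * √c') := by
        ring
    _ ≤ 192 * #c.divisors * √(Int.gcd (M * (24 * n - 23)) c) * (3 * √c) := by gcongr
    _ = _ := by ring

theorem statement4 :
    ∃ C : ℝ, 0 < C ∧
      ∀ m n v M : ℤ, 0 < v → Squarefree M → 24 * m - 23 = v ^ 2 * M →
        ∀ c : ℕ, 1 ≤ c →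
          ‖klooS m n c‖ ≤
            C * ((Int.gcd v (c : ℤ)).divisors.card : ℝ) * (c.divisors.card : ℝ) *
              Real.sqrt ((Int.gcd (M * (24 * n - 23)) (c : ℤ) : ℕ) : ℝ) *
                Real.sqrt (c : ℝ) := by
  refine ⟨576, by norm_num, fun m n v M hv hM hm c hc ↦ ?_⟩
  have hτ : (1 : ℝ) ≤ (Int.gcd v c).divisors.card := by
    exact_mod_cast card_pos.mpr
      (Nat.nonempty_divisors.mpr (Int.gcd_pos_of_ne_zero_left _ hv.ne').ne')
  refine (statement4_general n hM hm (Nat.one_le_iff_ne_zero.mp hc)).trans ?_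
  gcongr
  exact le_mul_of_one_le_right (by norm_num) hτ
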